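/- arXiv:1510.01697 — 3 statements merged into one kernel-verified Lean document; each statement's English description precedes it below -/
import Mathlib

section
/- Let q ≥ 3 be a real number, ε ∈ {0, 1/2, 1, 3/2, 2}, and d, r, a integers with d ≥ 2, r > 0, and 0 ≤ a ≤ d−1. Then |λ_r^a| ≤ max { A(r,s,a) : s ∈ ℤ, max(a−r+1, 0) ≤ s ≤ min(a, d−r) }. -/
/-- The Gaussian binomial coefficient `C_q(n,k)` for a real `q > 1` and integers `n, k`:
`∏_{i=1}^{k} (q^{n−i+1} − 1)/(q^i − 1)` if `0 ≤ k ≤ n`, and `0` otherwise. -/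
noncomputable def gaussBinom (q : ℝ) (n k : ℤ) : ℝ :=
  if 0 ≤ k ∧ k ≤ n then
    ∏ i ∈ Finset.Icc (1 : ℤ) k, (q ^ (n - i + 1) - 1) / (q ^ i - 1)
  else 0

/-- `binom(m,2) = m(m−1)/2`, as a real number. -/
noncomputable def binom2 (m : ℤ) : ℝ := ((m * (m - 1) : ℤ) : ℝ) / 2

/-- `A(r,s,a) := C_q(d−r,s) q^{binom(d−r−s,2) + (d−r−s)ε} C_q(r−1, a−s) q^{binom(r−a+s,2)}`. -/
noncomputable def Aval (q ε : ℝ) (d r s a : ℤ) : ℝ :=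
  gaussBinom q (d - r) s * q ^ (binom2 (d - r - s) + ((d - r - s : ℤ) : ℝ) * ε) *
    gaussBinom q (r - 1) (a - s) * q ^ binom2 (r - a + s)

/-- `λ_r^a := (−1)^{r+a} Σ_{s=max(a−r+1,0)}^{min(a,d−r)} (−1)^s A(r,s,a)`. -/
noncomputable def lamVal (q ε : ℝ) (d r a : ℤ) : ℝ :=
  (-1 : ℝ) ^ (r + a) *
    ∑ s ∈ Finset.Icc (max (a - r + 1) 0) (min a (d - r)),
      (-1 : ℝ) ^ s * Aval q ε d r s a

/-!
The summands `A(r, s, a)`, as a sequence in `s`, are log-concave: up to geometric factors they are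
products of two sequences of the form `k ↦ C_q(n, k) q ^ binom(n - k, 2)`, and the quotient of two
consecutive terms of such a sequence is `-q [k - n] / [k + 1]` with `[m] = (q ^ m - 1) / (q - 1)`,
which decreases in `k` because `[m]` increases in `m`. Hence the summands first increase and then
decrease, and the alternating sum of a nonnegative sequence of this shape is bounded by its largest
term.
-/

section AlternatingSum

variable {R : Type*} [CommRing R]

theorem sum_range_succ_alternating (g : ℕ → R) (n : ℕ) :
    ∑ i ∈ Finset.range (n + 1), (-1) ^ i * g i =
      g 0 - ∑ i ∈ Finset.range n, (-1) ^ i * g (i + 1) := by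
  simp [Finset.sum_range_succ', pow_succ, neg_add_eq_sub]

variable [LinearOrder R] [IsStrictOrderedRing R] {g : ℕ → R} {M : R} {n : ℕ}

theorem alternating_sum_mem_Icc_of_antitone (hlast : 0 ≤ g n)
    (hanti : ∀ i < n, g (i + 1) ≤ g i) :
    ∑ i ∈ Finset.range (n + 1), (-1) ^ i * g i ∈ Set.Icc 0 (g 0) := by
  induction n generalizing g with
  | zero => simpa using hlast
  | succ n ih =>
    obtain ⟨tail_nonneg, tail_le⟩ := ih (g := fun i => g (i + 1)) hlast
      (fun i hi => hanti _ (by lia))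
    have first_step : g 1 ≤ g 0 := hanti 0 (by lia)
    rw [sum_range_succ_alternating]
    exact ⟨sub_nonneg.mpr (tail_le.trans first_step), sub_le_self _ tail_nonneg⟩

-- The lower bound `g 0 - M`, sharper than `-M`, is what makes the induction go through.
theorem alternating_sum_mem_Icc_of_unimodal (hlast : 0 ≤ g n) (hM : ∀ i ≤ n, g i ≤ M)
    (huni : ∀ i, i + 2 ≤ n → g (i + 1) ≤ g i → g (i + 2) ≤ g (i + 1)) :
    ∑ i ∈ Finset.range (n + 1), (-1) ^ i * g i ∈ Set.Icc (g 0 - M) M := by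
  induction n generalizing g with
  | zero => simpa using ⟨hlast.trans (hM 0 le_rfl), hM 0 le_rfl⟩
  | succ n ih =>
    rcases le_total (g 1) (g 0) with hdesc | hasc
    · have hanti : ∀ i < n + 1, g (i + 1) ≤ g i := fun i hi => by
        induction i with
        | zero => exact hdesc
        | succ i ihi => exact huni i (by lia) (ihi (by lia))
      obtain ⟨sum_nonneg, sum_le⟩ := alternating_sum_mem_Icc_of_antitone hlast hanti
      have first_le : g 0 ≤ M := hM 0 (by lia)
      exact ⟨(sub_nonpos.mpr first_le).trans sum_nonneg, sum_le.trans first_le⟩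
    · obtain ⟨le_tail, tail_le⟩ := ih (g := fun i => g (i + 1)) hlast
        (fun i hi => hM _ (by lia)) (fun i hi => huni _ (by lia))
      rw [sum_range_succ_alternating]
      constructor <;> linarith

theorem abs_alternating_sum_le_of_unimodal (hfirst : 0 ≤ g 0) (hlast : 0 ≤ g n)
    (hM : ∀ i ≤ n, g i ≤ M)
    (huni : ∀ i, i + 2 ≤ n → g (i + 1) ≤ g i → g (i + 2) ≤ g (i + 1)) :
    |∑ i ∈ Finset.range (n + 1), (-1) ^ i * g i| ≤ M := by
  obtain ⟨le_sum, sum_le⟩ := alternating_sum_mem_Icc_of_unimodal hlast hM huni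
  exact abs_le.mpr ⟨by linarith, sum_le⟩

end AlternatingSum

theorem abs_sum_Icc_alternating {K : Type*} [Field K] [LinearOrder K] [IsStrictOrderedRing K]
    (f : ℤ → K) (l : ℤ) (n : ℕ) :
    |∑ s ∈ Finset.Icc l (l + n), (-1) ^ s * f s| =
      |∑ i ∈ Finset.range (n + 1), (-1) ^ i * f (l + i)| := by
  have hshift : ∑ s ∈ Finset.Icc l (l + n), (-1) ^ s * f s =
      (-1) ^ l * ∑ i ∈ Finset.range (n + 1), (-1) ^ i * f (l + i) := by
    rw [Int.Icc_eq_finset_map, Finset.sum_map, Finset.mul_sum,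
      show (l + n + 1 - l).toNat = n + 1 by lia]
    simp [zpow_add₀, mul_assoc]
  rw [hshift, abs_mul, abs_zpow, abs_neg, abs_one, one_zpow, one_mul]

section LogConcave

variable {K : Type*} [Field K] [LinearOrder K] {f g : ℤ → K}

/-- A two-sided sequence is log-concave if its terms are nonnegative and each product of two terms
at distance two is at most the square of the term between them. Finite sequences are covered by
extending them by zero; internal zeros are not excluded. -/
structure IsLogConcave (f : ℤ → K) : Prop where
  nonneg : ∀ s, 0 ≤ f s
  mul_le_sq : ∀ s, f (s - 1) * f (s + 1) ≤ f s ^ 2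

namespace IsLogConcave

theorem comp_sub_left (hf : IsLogConcave f) (c : ℤ) : IsLogConcave fun s => f (c - s) where
  nonneg s := hf.nonneg (c - s)
  mul_le_sq s := by
    rw [mul_comm, show c - (s + 1) = c - s - 1 by ring, show c - (s - 1) = c - s + 1 by ring]
    exact hf.mul_le_sq (c - s)

variable [IsStrictOrderedRing K]

theorem zpow {c : K} (hc : 0 < c) : IsLogConcave fun s => c ^ s where
  nonneg s := (zpow_pos hc s).le
  mul_le_sq s := by
    rw [← zpow_add₀ hc.ne', sq, ← zpow_add₀ hc.ne', show s - 1 + (s + 1) = s + s by ring]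

theorem mul (hf : IsLogConcave f) (hg : IsLogConcave g) : IsLogConcave fun s => f s * g s where
  nonneg s := mul_nonneg (hf.nonneg s) (hg.nonneg s)
  mul_le_sq s := calc
    f (s - 1) * g (s - 1) * (f (s + 1) * g (s + 1))
      = f (s - 1) * f (s + 1) * (g (s - 1) * g (s + 1)) := by ring
    _ ≤ f s ^ 2 * g s ^ 2 := mul_le_mul (hf.mul_le_sq s) (hg.mul_le_sq s)
        (mul_nonneg (hg.nonneg _) (hg.nonneg _)) (sq_nonneg _)
    _ = (f s * g s) ^ 2 := by ring

theorem add_two_le_add_one (hf : IsLogConcave f) {s : ℤ} (hpos : 0 < f s)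
    (hdesc : f (s + 1) ≤ f s) : f (s + 2) ≤ f (s + 1) := by
  refine le_of_mul_le_mul_left ?_ hpos
  calc f s * f (s + 2) ≤ f (s + 1) ^ 2 := by simpa [add_assoc] using hf.mul_le_sq (s + 1)
    _ = f (s + 1) * f (s + 1) := sq _
    _ ≤ f s * f (s + 1) := mul_le_mul_of_nonneg_right hdesc (hf.nonneg _)

theorem abs_alternating_sum_le (hf : IsLogConcave f) {l u : ℤ} (hlu : l ≤ u)
    (hpos : ∀ s ∈ Finset.Icc l u, 0 < f s) {M : K} (hM : ∀ s ∈ Finset.Icc l u, f s ≤ M) :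
    |∑ s ∈ Finset.Icc l u, (-1) ^ s * f s| ≤ M := by
  obtain ⟨n, rfl⟩ := Int.le.dest hlu
  rw [abs_sum_Icc_alternating]
  refine abs_alternating_sum_le_of_unimodal (hf.nonneg _) (hf.nonneg _)
    (fun i hi => hM _ (Finset.mem_Icc.mpr (by lia))) fun i hi hdesc => ?_
  push_cast [← add_assoc] at hdesc ⊢
  exact hf.add_two_le_add_one (hpos _ (Finset.mem_Icc.mpr (by lia))) hdesc

end IsLogConcave

-- With positive denominators the hypotheses say `y / x = u / v`, `z / y = u' / v'` and
-- `u' / v' ≤ u / v`.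
theorem mul_le_sq_of_ratio_le [IsStrictOrderedRing K] {x y z u v u' v' : K}
    (hxy : y * v = x * u) (hyz : z * v' = y * u') (hu' : 0 < u') (hu'u : u' ≤ u) (hv : 0 < v)
    (hvv' : v ≤ v') : x * z ≤ y ^ 2 := by
  have hden : 0 < u * v' := mul_pos (hu'.trans_le hu'u) (hv.trans_le hvv')
  refine le_of_mul_le_mul_right ?_ hden
  calc x * z * (u * v') = y ^ 2 * (u' * v) := by
        linear_combination x * u * hyz - y * u' * hxy
    _ ≤ y ^ 2 * (u * v') := by
        have hu : 0 ≤ u := hu'.le.trans hu'u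
        gcongr

end LogConcave

section QNumber

variable {K : Type*} [Field K] {q : K}

/-- The `q`-number `[m] = (q ^ m - 1) / (q - 1)`, for all integers `m`. It is increasing in `m` on
both sides of `q = 1`, which lets `q < 1` and `q > 1` be treated together. Junk value `0` at
`q = 1`. -/
def qNumber (q : K) (m : ℤ) : K := (q ^ m - 1) / (q - 1)

@[simp]
theorem qNumber_zero (q : K) : qNumber q 0 = 0 := by
  simp [qNumber]

theorem qNumber_eq_neg_zpow_mul (hq : q ≠ 0) (m : ℤ) :
    qNumber q m = -q ^ m * qNumber q (-m) := by
  have hqm : q ^ m ≠ 0 := zpow_ne_zero m hq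
  rw [qNumber, qNumber, zpow_neg, ← mul_div_assoc, neg_mul, mul_sub, mul_inv_cancel₀ hqm]
  ring

variable [LinearOrder K] [IsStrictOrderedRing K]

theorem qNumber_strictMono (hq : 0 < q) (hq1 : q ≠ 1) : StrictMono (qNumber q) := by
  intro m n hmn
  rcases hq1.lt_or_gt with hlt | hgt
  · exact (div_lt_div_right_of_neg (sub_neg.mpr hlt)).mpr
      (sub_lt_sub_right (zpow_right_strictAnti₀ hq hlt hmn) 1)
  · exact div_lt_div_of_pos_right (sub_lt_sub_right (zpow_right_strictMono₀ hgt hmn) 1)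
      (sub_pos.mpr hgt)

theorem qNumber_pos (hq : 0 < q) (hq1 : q ≠ 1) {m : ℤ} (hm : 0 < m) : 0 < qNumber q m := by
  simpa using qNumber_strictMono hq hq1 hm

theorem qNumber_neg (hq : 0 < q) (hq1 : q ≠ 1) {m : ℤ} (hm : m < 0) : qNumber q m < 0 := by
  simpa using qNumber_strictMono hq hq1 hm

end QNumber

section GaussBinom

variable {q : ℝ}

theorem gaussBinom_eq_zero {n k : ℤ} (h : ¬(0 ≤ k ∧ k ≤ n)) : gaussBinom q n k = 0 :=
  if_neg h

theorem gaussBinom_eq_prod_qNumber (hq1 : q ≠ 1) {n k : ℤ} (hk : 0 ≤ k) (hkn : k ≤ n) :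
    gaussBinom q n k = ∏ i ∈ Finset.Icc 1 k, qNumber q (n - i + 1) / qNumber q i := by
  rw [gaussBinom, if_pos ⟨hk, hkn⟩]
  simp only [qNumber, div_div_div_cancel_right₀ (sub_ne_zero.mpr hq1)]

theorem gaussBinom_pos (hq : 0 < q) (hq1 : q ≠ 1) {n k : ℤ} (hk : 0 ≤ k) (hkn : k ≤ n) :
    0 < gaussBinom q n k := by
  rw [gaussBinom_eq_prod_qNumber hq1 hk hkn]
  refine Finset.prod_pos fun i hi => ?_
  rw [Finset.mem_Icc] at hi
  exact div_pos (qNumber_pos hq hq1 (by lia)) (qNumber_pos hq hq1 (by lia))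

theorem gaussBinom_nonneg (hq : 0 < q) (hq1 : q ≠ 1) (n k : ℤ) : 0 ≤ gaussBinom q n k := by
  by_cases h : 0 ≤ k ∧ k ≤ n
  · exact (gaussBinom_pos hq hq1 h.1 h.2).le
  · exact (gaussBinom_eq_zero h).ge

theorem gaussBinom_add_one_mul_qNumber (hq : 0 < q) (hq1 : q ≠ 1) (n k : ℤ) :
    gaussBinom q n (k + 1) * qNumber q (k + 1) = gaussBinom q n k * qNumber q (n - k) := by
  by_cases h : 0 ≤ k ∧ k + 1 ≤ n
  · have hinsert : Finset.Icc 1 (k + 1) = insert (k + 1) (Finset.Icc 1 k) := by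
      ext i; simp only [Finset.mem_Icc, Finset.mem_insert]; lia
    have hne : qNumber q (k + 1) ≠ 0 := (qNumber_pos hq hq1 (by lia)).ne'
    rw [gaussBinom_eq_prod_qNumber hq1 (by lia) h.2,
      gaussBinom_eq_prod_qNumber hq1 h.1 (by lia), hinsert, Finset.prod_insert (by simp),
      show n - (k + 1) + 1 = n - k by ring]
    field_simp
  · have hleft : gaussBinom q n (k + 1) * qNumber q (k + 1) = 0 := by
      rcases eq_or_ne (k + 1) 0 with hk | hk
      · rw [hk, qNumber_zero, mul_zero]
      · rw [gaussBinom_eq_zero (by lia), zero_mul]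
    have hright : gaussBinom q n k * qNumber q (n - k) = 0 := by
      rcases eq_or_ne (n - k) 0 with hk | hk
      · rw [hk, qNumber_zero, mul_zero]
      · rw [gaussBinom_eq_zero (by lia), zero_mul]
    rw [hleft, hright]

theorem rpow_binom2_add_one (hq : 0 < q) (m : ℤ) :
    q ^ binom2 (m + 1) = q ^ binom2 m * q ^ m := by
  rw [← Real.rpow_intCast, ← Real.rpow_add hq]
  congr 1
  simp only [binom2]
  push_cast
  ring

end GaussBinom

section GeomESymm

variable {q : ℝ}

/-- `C_q(n, k) q ^ binom(n - k, 2)`, which by the `q`-binomial theorem is the elementary symmetric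
polynomial of degree `n - k` evaluated at `1, q, …, q ^ (n - 1)`. The sequences `A(r, ·, a)` are
built from two of these. -/
noncomputable def geomESymm (q : ℝ) (n k : ℤ) : ℝ := gaussBinom q n k * q ^ binom2 (n - k)

theorem geomESymm_pos (hq : 0 < q) (hq1 : q ≠ 1) {n k : ℤ} (hk : 0 ≤ k) (hkn : k ≤ n) :
    0 < geomESymm q n k :=
  mul_pos (gaussBinom_pos hq hq1 hk hkn) (Real.rpow_pos_of_pos hq _)

theorem geomESymm_nonneg (hq : 0 < q) (hq1 : q ≠ 1) (n k : ℤ) : 0 ≤ geomESymm q n k :=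
  mul_nonneg (gaussBinom_nonneg hq hq1 n k) (Real.rpow_pos_of_pos hq _).le

theorem geomESymm_eq_zero {n k : ℤ} (h : ¬(0 ≤ k ∧ k ≤ n)) : geomESymm q n k = 0 := by
  rw [geomESymm, gaussBinom_eq_zero h, zero_mul]

theorem geomESymm_add_one_mul_qNumber (hq : 0 < q) (hq1 : q ≠ 1) (n k : ℤ) :
    geomESymm q n (k + 1) * qNumber q (k + 1) = geomESymm q n k * (-q * qNumber q (k - n)) := by
  have hpow : q ^ binom2 (n - k) = q ^ binom2 (n - (k + 1)) * q ^ (n - (k + 1)) := by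
    rw [← rpow_binom2_add_one hq, show n - (k + 1) + 1 = n - k by ring]
  have hflip : q ^ (n - (k + 1)) * (-q * qNumber q (k - n)) = qNumber q (n - k) := by
    rw [qNumber_eq_neg_zpow_mul hq.ne' (n - k), neg_sub,
      show n - k = n - (k + 1) + 1 by ring, zpow_add_one₀ hq.ne']
    ring
  calc geomESymm q n (k + 1) * qNumber q (k + 1)
      = gaussBinom q n (k + 1) * qNumber q (k + 1) * q ^ binom2 (n - (k + 1)) := by
        rw [geomESymm]; ring
    _ = gaussBinom q n k * qNumber q (n - k) * q ^ binom2 (n - (k + 1)) := by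
        rw [gaussBinom_add_one_mul_qNumber hq hq1]
    _ = geomESymm q n k * (-q * qNumber q (k - n)) := by
        rw [geomESymm, hpow, ← hflip]; ring

theorem isLogConcave_geomESymm (hq : 0 < q) (hq1 : q ≠ 1) (n : ℤ) :
    IsLogConcave (geomESymm q n) where
  nonneg := geomESymm_nonneg hq hq1 n
  mul_le_sq k := by
    by_cases hk : 0 < k ∧ k < n
    · have hmono : Monotone (qNumber q) := (qNumber_strictMono hq hq1).monotone
      have hdown := geomESymm_add_one_mul_qNumber hq hq1 n (k - 1)
      have hup := geomESymm_add_one_mul_qNumber hq hq1 n k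
      rw [sub_add_cancel] at hdown
      have hneg : qNumber q (k - n) < 0 := qNumber_neg hq hq1 (by lia)
      exact mul_le_sq_of_ratio_le hdown hup (mul_pos_of_neg_of_neg (neg_neg_of_pos hq) hneg)
        (mul_le_mul_of_nonpos_left (hmono (by lia)) (neg_nonpos.mpr hq.le))
        (qNumber_pos hq hq1 hk.1) (hmono (by lia))
    · have hzero : geomESymm q n (k - 1) * geomESymm q n (k + 1) = 0 := by
        rcases not_and_or.mp hk with hk | hk
        · rw [geomESymm_eq_zero (by lia), zero_mul]
        · rw [geomESymm_eq_zero (k := k + 1) (by lia), mul_zero]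
      rw [hzero]
      exact sq_nonneg _

end GeomESymm

section Aval

variable {q : ℝ}

theorem Aval_eq_geomESymm_mul (hq : 0 < q) (ε : ℝ) (d r s a : ℤ) :
    Aval q ε d r s a = geomESymm q (d - r) s * (q ^ ε) ^ (d - r - s) *
      (geomESymm q (r - 1) (a - s) * q ^ (r - 1 - (a - s))) := by
  have hε : q ^ (binom2 (d - r - s) + ((d - r - s : ℤ) : ℝ) * ε) =
      q ^ binom2 (d - r - s) * (q ^ ε) ^ (d - r - s) := by
    rw [Real.rpow_add hq, ← Real.rpow_intCast (q ^ ε), ← Real.rpow_mul hq.le, mul_comm ε]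
  have hbinom : q ^ binom2 (r - a + s) =
      q ^ binom2 (r - 1 - (a - s)) * q ^ (r - 1 - (a - s)) := by
    rw [← rpow_binom2_add_one hq, show r - 1 - (a - s) + 1 = r - a + s by ring]
  rw [Aval, geomESymm, geomESymm, hε, hbinom]
  ring

theorem Aval_pos (hq : 0 < q) (hq1 : q ≠ 1) (ε : ℝ) {d r s a : ℤ}
    (hs : s ∈ Finset.Icc (max (a - r + 1) 0) (min a (d - r))) : 0 < Aval q ε d r s a := by
  rw [Finset.mem_Icc] at hs
  have hfirst : 0 < geomESymm q (d - r) s := geomESymm_pos hq hq1 (by lia) (by lia)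
  have hsecond : 0 < geomESymm q (r - 1) (a - s) := geomESymm_pos hq hq1 (by lia) (by lia)
  rw [Aval_eq_geomESymm_mul hq]
  positivity

theorem isLogConcave_Aval (hq : 0 < q) (hq1 : q ≠ 1) (ε : ℝ) (d r a : ℤ) :
    IsLogConcave fun s => Aval q ε d r s a := by
  simp only [Aval_eq_geomESymm_mul hq]
  have hfirst : IsLogConcave fun s => geomESymm q (d - r) s * (q ^ ε) ^ (d - r - s) :=
    (isLogConcave_geomESymm hq hq1 (d - r)).mul
      ((IsLogConcave.zpow (Real.rpow_pos_of_pos hq ε)).comp_sub_left (d - r))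
  have hsecond : IsLogConcave fun k => geomESymm q (r - 1) k * q ^ (r - 1 - k) :=
    (isLogConcave_geomESymm hq hq1 (r - 1)).mul ((IsLogConcave.zpow hq).comp_sub_left (r - 1))
  exact hfirst.mul (hsecond.comp_sub_left a)

theorem nonempty_Icc_Aval {d r a : ℤ} (hr : 0 < r) (hrd : r ≤ d) (ha : 0 ≤ a) (had : a ≤ d - 1) :
    (Finset.Icc (max (a - r + 1) 0) (min a (d - r))).Nonempty :=
  Finset.nonempty_Icc.mpr (by lia)

theorem abs_lamVal (q ε : ℝ) (d r a : ℤ) :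
    |lamVal q ε d r a| = |∑ s ∈ Finset.Icc (max (a - r + 1) 0) (min a (d - r)),
      (-1 : ℝ) ^ s * Aval q ε d r s a| := by
  rw [lamVal, abs_mul, abs_zpow, abs_neg, abs_one, one_zpow, one_mul]

end Aval

theorem stmt11_general (q ε : ℝ) (hq : 0 < q) (hq1 : q ≠ 1) (d r a : ℤ) (hr : 0 < r)
    (hrd : r ≤ d) (ha : 0 ≤ a) (had : a ≤ d - 1) :
    |lamVal q ε d r a| ≤
      (Finset.Icc (max (a - r + 1) 0) (min a (d - r))).sup'
        (nonempty_Icc_Aval hr hrd ha had) (fun s => Aval q ε d r s a) := by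
  rw [abs_lamVal]
  exact (isLogConcave_Aval hq hq1 ε d r a).abs_alternating_sum_le
    (Finset.nonempty_Icc.mp (nonempty_Icc_Aval hr hrd ha had)) (fun _ hs => Aval_pos hq hq1 ε hs)
    (fun _ hs => Finset.le_sup' (fun s => Aval q ε d r s a) hs)

theorem stmt11 (q ε : ℝ) (hq : 3 ≤ q)
    (hε : ε ∈ ({0, 1/2, 1, 3/2, 2} : Set ℝ))
    (d r a : ℤ) (hd : 2 ≤ d) (hr : 0 < r) (hrd : r ≤ d)
    (ha : 0 ≤ a) (had : a ≤ d - 1) :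
    |lamVal q ε d r a| ≤
      (Finset.Icc (max (a - r + 1) 0) (min a (d - r))).sup'
        (Finset.nonempty_Icc.mpr (by omega)) (fun s => Aval q ε d r s a) :=
  stmt11_general q ε (by linarith) (by rintro rfl; norm_num at hq) d r a hr hrd ha had
end

section
/- Let q ≥ 3 be a prime power and let t and d be integers with t even and 0 ≤ t ≤ √(8d/5) − 2 (equivalently, 5(t+2)² ≤ 8d). Then a (d,t)-EKR set Y of generators of the symplectic polar space W(2d−1,q) has maximum cardinality among all (d,t)-EKR sets if and only if there exists a generator G such that Y is exactly the set of all generators W with dim(W ∩ G) ≥ d − t/2. -/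
/-!
Write `t = 2 * e`. Call the codimension of the intersection of two generators their distance, so
that an EKR set is a set of diameter at most `t`, and every ball of radius `e` is one.

Counting pairs of a generator and a vector of it, with the gates of the generators through a point,
gives the ratio of the sizes of consecutive spheres. Hence all balls of radius `e` have the same
size, which is at least `q ^ (e * (d - e) + (e + 1).choose 2)`.

Let `Z` be an EKR set and let `A` be an intersection of two of its members, of least possible
dimension. Three pairwise intersections span a totally isotropic subspace, so every member of `Z`
meets `A` in dimension at least `d - 3 * e`. The members that meet `A` in a larger subspace are
few. If `A` has dimension `d - 2 * e` and `W` in `Z` meets it in dimension exactly `d - 3 * e`, then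
`A` and the vectors of `W` orthogonal to `A` span a generator `G` at distance at most `e` from `W`;
the ball around `G` contains every `U` in `Z` for which `W ⊓ A` and `U ⊓ A` span `A`, and only few
members fail this for a given one. So if `Z` has a member outside the ball, it is covered by three
families whose total size is less than that of a ball.
-/

open Module

section DoubleCounting

variable {α β : Type*} [Finite α] [Finite β]

theorem ncard_mul_le_ncard_mul {s : Set α} {t : Set β} (r : α → β → Prop) {m n : ℕ}
    (hm : ∀ a ∈ s, m ≤ {b ∈ t | r a b}.ncard) (hn : ∀ b ∈ t, {a ∈ s | r a b}.ncard ≤ n) :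
    s.ncard * m ≤ t.ncard * n := by
  classical
  obtain ⟨s, rfl⟩ := s.toFinite.exists_finset_coe
  obtain ⟨t, rfl⟩ := t.toFinite.exists_finset_coe
  simp only [Finset.mem_coe, ← Finset.coe_filter, Set.ncard_coe_finset] at hm hn ⊢
  exact Finset.card_mul_le_card_mul r hm hn

theorem ncard_mul_eq_ncard_mul {s : Set α} {t : Set β} (r : α → β → Prop) {m n : ℕ}
    (hm : ∀ a ∈ s, {b ∈ t | r a b}.ncard = m) (hn : ∀ b ∈ t, {a ∈ s | r a b}.ncard = n) :
    s.ncard * m = t.ncard * n :=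
  (ncard_mul_le_ncard_mul r (fun a ha => (hm a ha).ge) fun b hb => (hn b hb).le).antisymm
    (ncard_mul_le_ncard_mul (flip r) (fun b hb => (hn b hb).ge) fun a ha => (hm a ha).le)

theorem mul_ncard_mul_eq_of_fiber {s s' : Set α} {t : Set β} {r r' : α → β → Prop} {c m n : ℕ}
    (h : ∀ b ∈ t, c * {a ∈ s | r a b}.ncard = {a ∈ s' | r' a b}.ncard)
    (hm : ∀ a ∈ s, {b ∈ t | r a b}.ncard = m) (hn : ∀ a ∈ s', {b ∈ t | r' a b}.ncard = n) :
    c * (s.ncard * m) = s'.ncard * n := by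
  classical
  obtain ⟨s, rfl⟩ := s.toFinite.exists_finset_coe
  obtain ⟨s', rfl⟩ := s'.toFinite.exists_finset_coe
  obtain ⟨t, rfl⟩ := t.toFinite.exists_finset_coe
  simp only [Finset.mem_coe, ← Finset.coe_filter, Set.ncard_coe_finset] at h hm hn ⊢
  rw [← Finset.sum_const_nat hm, ← Finset.sum_const_nat hn]
  refine .trans ?_ ((Finset.sum_congr rfl h).trans
    (Finset.sum_card_bipartiteAbove_eq_sum_card_bipartiteBelow r').symm)
  rw [← Finset.mul_sum]
  exact congrArg (c * ·) (Finset.sum_card_bipartiteAbove_eq_sum_card_bipartiteBelow r)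

end DoubleCounting

section Subspaces

variable {F V : Type*} [Field F] [AddCommGroup V] [Module F V] [FiniteDimensional F V]

theorem finrank_inf_ker_add_one {E : Submodule F V} {f : Dual F V} (h : ∃ x ∈ E, f x ≠ 0) :
    finrank F ↥(E ⊓ LinearMap.ker f) + 1 = finrank F E := by
  obtain ⟨x, hxE, hfx⟩ := h
  have hf : f ≠ 0 := fun h => hfx (LinearMap.congr_fun h x)
  have hlt : LinearMap.ker f < E ⊔ LinearMap.ker f :=
    right_lt_sup.2 fun hle => hfx (LinearMap.mem_ker.1 (hle hxE))
  have := Submodule.finrank_sup_add_finrank_inf_eq E (LinearMap.ker f)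
  have := Dual.finrank_ker_add_one_of_ne_zero hf
  have := Submodule.finrank_lt_finrank_of_lt hlt
  have := Submodule.finrank_le (E ⊔ LinearMap.ker f)
  lia

theorem exists_le_finrank_eq (E : Submodule F V) {m : ℕ} (hm : m ≤ finrank F E) :
    ∃ D ≤ E, finrank F D = m := by
  induction m with
  | zero => exact ⟨⊥, bot_le, finrank_bot F V⟩
  | succ m ih =>
    obtain ⟨D, hDE, hD⟩ := ih (Nat.le_of_succ_le hm)
    obtain ⟨x, hxE, hxD⟩ := SetLike.exists_of_lt (hDE.lt_of_ne (by rintro rfl; lia))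
    refine ⟨D ⊔ F ∙ x, sup_le hDE ?_, by rw [Submodule.finrank_sup_span_singleton hxD, hD]⟩
    rwa [Submodule.span_singleton_le_iff_mem]

theorem finrank_inf_add_finrank_inf_le (U W E : Submodule F V) :
    finrank F ↥(U ⊓ E) + finrank F ↥(W ⊓ E) ≤ finrank F E + finrank F ↥(U ⊓ W) := by
  have hsup : U ⊓ E ⊔ W ⊓ E ≤ E := sup_le inf_le_right inf_le_right
  have hinf : U ⊓ E ⊓ (W ⊓ E) ≤ U ⊓ W := inf_le_inf inf_le_left inf_le_left
  rw [← Submodule.finrank_sup_add_finrank_inf_eq]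
  exact Nat.add_le_add (Submodule.finrank_mono hsup) (Submodule.finrank_mono hinf)

theorem finrank_inf_sup_inf (U W₁ W₂ : Submodule F V) :
    finrank F ↥(U ⊓ W₁ ⊔ U ⊓ W₂) + finrank F ↥(U ⊓ (W₁ ⊓ W₂)) =
      finrank F ↥(U ⊓ W₁) + finrank F ↥(U ⊓ W₂) := by
  rw [inf_inf_distrib_left, Submodule.finrank_sup_add_finrank_inf_eq]

theorem finrank_inf_sup_inf_sup_inf (U W₁ W₂ : Submodule F V) :
    finrank F ↥(U ⊓ W₁ ⊔ U ⊓ W₂ ⊔ W₁ ⊓ W₂) + 2 * finrank F ↥(U ⊓ (W₁ ⊓ W₂)) =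
      finrank F ↥(U ⊓ W₁) + finrank F ↥(U ⊓ W₂) + finrank F ↥(W₁ ⊓ W₂) := by
  have hinf : (U ⊓ W₁ ⊔ U ⊓ W₂) ⊓ (W₁ ⊓ W₂) = U ⊓ (W₁ ⊓ W₂) :=
    le_antisymm (inf_le_inf_right _ (sup_le inf_le_left inf_le_left))
      (le_inf ((inf_le_inf_left _ inf_le_left).trans le_sup_left) inf_le_right)
  have h := Submodule.finrank_sup_add_finrank_inf_eq (U ⊓ W₁ ⊔ U ⊓ W₂) (W₁ ⊓ W₂)
  have := finrank_inf_sup_inf U W₁ W₂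
  rw [hinf] at h
  lia

theorem ncard_coe_diff_of_le [Finite F] {T U : Submodule F V} (h : T ≤ U) {j : ℕ}
    (hj : finrank F U = finrank F T + j) :
    ((U : Set V) \ T).ncard = Nat.card F ^ finrank F T * (Nat.card F ^ j - 1) := by
  have : Finite V := Module.finite_of_finite F
  have hcard (W : Submodule F V) : (W : Set V).ncard = Nat.card F ^ finrank F W :=
    natCard_eq_pow_finrank
  rw [Set.ncard_sdiff h, hcard, hcard, hj, pow_add, Nat.mul_sub, mul_one]

theorem le_ncard_coe_diff_of_le [Finite F] {T U : Submodule F V} (h : T ≤ U) {j : ℕ}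
    (hj : finrank F T + j ≤ finrank F U) :
    Nat.card F ^ finrank F T * (Nat.card F ^ j - 1) ≤ ((U : Set V) \ T).ncard := by
  obtain ⟨i, hi⟩ := Nat.exists_eq_add_of_le hj
  rw [ncard_coe_diff_of_le h (hi.trans (add_assoc _ j i))]
  gcongr
  · exact Nat.card_pos
  · exact Nat.le_add_right j i

theorem ncard_setOf_mem_apply_ne_zero [Finite F] {E : Submodule F V} {f : Dual F V}
    (h : ∃ x ∈ E, f x ≠ 0) {n : ℕ} (hE : finrank F E = n + 1) :
    {x | x ∈ E ∧ f x ≠ 0}.ncard = Nat.card F ^ n * (Nat.card F - 1) := by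
  have hrank := finrank_inf_ker_add_one h
  have hdiff : {x | x ∈ E ∧ f x ≠ 0} = (E : Set V) \ ↑(E ⊓ LinearMap.ker f) := by
    ext x
    simp +contextual
  rw [hdiff, ncard_coe_diff_of_le inf_le_left hrank.symm, pow_one,
    show finrank F ↥(E ⊓ LinearMap.ker f) = n by lia]

/- The pairs counted are a member of `S` and a functional on `V` that vanishes on `D` but not on
`E`; the kernel of such a functional cuts `E` in a hyperplane. -/
theorem ncard_mul_le_of_hyperplanes [Finite F] {D E : Submodule F V} (hDE : D ≤ E) {b j m M : ℕ}
    (hb : finrank F E = finrank F D + b) {S : Set (Submodule F V)}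
    (hS : ∀ W ∈ S, ∃ U ≤ E, D ≤ U ∧ finrank F U + j ≤ finrank F E ∧ m ≤ finrank F ↥(W ⊓ U))
    (hM : ∀ H ≤ E, finrank F H + 1 = finrank F E →
      {W ∈ S | m ≤ finrank F ↥(W ⊓ H)}.ncard ≤ M) :
    S.ncard * (Nat.card F ^ j - 1) ≤ (Nat.card F ^ b - 1) * M := by
  have : Finite V := Module.finite_of_finite F
  have : Finite (Dual F V) := Module.finite_of_finite F
  have hann (W : Submodule F V) := Subspace.finrank_add_finrank_dualAnnihilator_eq W
  have hann_le {W W' : Submodule F V} (h : W ≤ W') : W'.dualAnnihilator ≤ W.dualAnnihilator :=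
    Submodule.dualAnnihilator_anti h
  have key : S.ncard * (Nat.card F ^ finrank F E.dualAnnihilator * (Nat.card F ^ j - 1)) ≤
      ((D.dualAnnihilator : Set (Dual F V)) \ E.dualAnnihilator).ncard * M := by
    refine ncard_mul_le_ncard_mul (fun W f => m ≤ finrank F ↥(W ⊓ (E ⊓ LinearMap.ker f))) ?_ ?_
    · intro W hW
      obtain ⟨U, hUE, hDU, hUj, hUm⟩ := hS W hW
      refine (le_ncard_coe_diff_of_le (hann_le hUE)
        (by have := hann U; have := hann E; lia)).trans (Set.ncard_le_ncard fun f hf => ?_)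
      have hU : U ≤ E ⊓ LinearMap.ker f :=
        le_inf hUE fun x hx => (Submodule.mem_dualAnnihilator f).1 hf.1 x hx
      exact ⟨⟨hann_le hDU hf.1, hf.2⟩, hUm.trans (Submodule.finrank_mono (inf_le_inf_left W hU))⟩
    · intro f hf
      refine hM _ inf_le_left (finrank_inf_ker_add_one ?_)
      by_contra! hE
      exact hf.2 ((Submodule.mem_dualAnnihilator f).2 hE)
  rw [ncard_coe_diff_of_le (hann_le hDE) (j := b) (by have := hann D; have := hann E; lia),
    mul_left_comm, mul_assoc] at key
  exact Nat.le_of_mul_le_mul_left key (pow_pos Nat.card_pos _)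

end Subspaces

section Isotropic

variable {F V : Type*} [Field F] [AddCommGroup V] [Module F V]

/-- The subspace `W` is totally isotropic for the bilinear form `B`. -/
def IsTotallyIsotropic (B : LinearMap.BilinForm F V) (W : Submodule F V) : Prop :=
  ∀ x ∈ W, ∀ y ∈ W, B x y = 0

/-- A generator of the polar space of `B`, when `V` has dimension `2 * d`: a totally isotropic
subspace of dimension `d`. -/
def IsGenerator (B : LinearMap.BilinForm F V) (d : ℕ) (W : Submodule F V) : Prop :=
  finrank F W = d ∧ IsTotallyIsotropic B W

variable {B : LinearMap.BilinForm F V} {d : ℕ} {U W W₁ W₂ : Submodule F V}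

theorem IsTotallyIsotropic.mono (hW : IsTotallyIsotropic B W) (h : U ≤ W) :
    IsTotallyIsotropic B U :=
  fun x hx y hy => hW x (h hx) y (h hy)

theorem IsTotallyIsotropic.le_orthogonal (hW : IsTotallyIsotropic B W) : W ≤ B.orthogonal W :=
  fun x hx y hy => hW y hy x hx

theorem IsTotallyIsotropic.sup (hB : B.IsRefl) (hU : IsTotallyIsotropic B U)
    (hW : IsTotallyIsotropic B W) (hUW : ∀ x ∈ U, ∀ y ∈ W, B x y = 0) :
    IsTotallyIsotropic B (U ⊔ W) := by
  intro x hx y hy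
  obtain ⟨a, ha, b, hb, rfl⟩ := Submodule.mem_sup.1 hx
  obtain ⟨a', ha', b', hb', rfl⟩ := Submodule.mem_sup.1 hy
  simp [hU a ha a' ha', hW b hb b' hb', hUW a ha b' hb', hB.eq_zero (hUW a' ha' b hb)]

theorem IsTotallyIsotropic.sup_span_singleton (hB : B.IsAlt) (hU : IsTotallyIsotropic B U) {v : V}
    (hv : v ∈ B.orthogonal U) : IsTotallyIsotropic B (U ⊔ F ∙ v) := by
  refine hU.sup hB.isRefl ?_ ?_
  · intro x hx y hy
    obtain ⟨a, rfl⟩ := Submodule.mem_span_singleton.1 hx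
    obtain ⟨b, rfl⟩ := Submodule.mem_span_singleton.1 hy
    simp [hB.self_eq_zero v]
  · intro x hx y hy
    obtain ⟨b, rfl⟩ := Submodule.mem_span_singleton.1 hy
    simp [show B x v = 0 from hv x hx]

theorem isTotallyIsotropic_inf_sup_inf_sup_inf (hB : B.IsRefl) (hW : IsTotallyIsotropic B W)
    (hW₁ : IsTotallyIsotropic B W₁) (hW₂ : IsTotallyIsotropic B W₂) :
    IsTotallyIsotropic B (W ⊓ W₁ ⊔ W ⊓ W₂ ⊔ W₁ ⊓ W₂) := by
  refine (hW.mono (sup_le inf_le_left inf_le_left)).sup hB (hW₁.mono inf_le_left) ?_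
  intro x hx y hy
  obtain ⟨a, ha, b, hb, rfl⟩ := Submodule.mem_sup.1 hx
  simp [hW₁ a ha.2 y hy.1, hW₂ b hb.2 y hy.2]

theorem orthogonal_sup (B : LinearMap.BilinForm F V) (U W : Submodule F V) :
    B.orthogonal (U ⊔ W) = B.orthogonal U ⊓ B.orthogonal W := by
  refine le_antisymm (le_inf (LinearMap.BilinForm.orthogonal_le le_sup_left)
    (LinearMap.BilinForm.orthogonal_le le_sup_right)) fun x hx y hy => ?_
  obtain ⟨a, ha, b, hb, rfl⟩ := Submodule.mem_sup.1 hy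
  rw [map_add, LinearMap.add_apply, hx.1 a ha, hx.2 b hb, add_zero]

variable [FiniteDimensional F V]

theorem finrank_add_finrank_orthogonal_eq (hn : B.Nondegenerate) (W : Submodule F V) :
    finrank F W + finrank F (B.orthogonal W) = finrank F V := by
  have := LinearMap.BilinForm.finrank_orthogonal hn W
  have := Submodule.finrank_le W
  lia

variable (hn : B.Nondegenerate) (hV : finrank F V = 2 * d)
include hn hV

theorem IsTotallyIsotropic.finrank_le (hW : IsTotallyIsotropic B W) : finrank F W ≤ d := by
  have := finrank_add_finrank_orthogonal_eq hn W
  have := Submodule.finrank_mono hW.le_orthogonal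
  lia

theorem IsGenerator.orthogonal_eq (hW : IsGenerator B d W) : B.orthogonal W = W := by
  refine (Submodule.eq_of_le_of_finrank_le hW.2.le_orthogonal ?_).symm
  have := finrank_add_finrank_orthogonal_eq hn W
  have := hW.1
  lia

theorem exists_isGenerator (hB : B.IsAlt) : ∃ W, IsGenerator B d W := by
  obtain ⟨W, hW⟩ := exists_maximal_of_wellFoundedGT (IsTotallyIsotropic B)
    ⟨⊥, fun x hx y _ => by simp [(Submodule.mem_bot F).1 hx]⟩
  refine ⟨W, ?_, hW.prop⟩
  have hperp : B.orthogonal W ≤ W := fun v hv =>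
    hW.le_of_ge (hW.prop.sup_span_singleton hB hv) le_sup_left
      (Submodule.mem_sup_right (Submodule.mem_span_singleton_self v))
  have := finrank_add_finrank_orthogonal_eq hn W
  have := Submodule.finrank_mono hperp
  have := hW.prop.finrank_le hn hV
  lia

theorem IsGenerator.finrank_inf_orthogonal_add (hW : IsGenerator B d W) (A : Submodule F V) :
    finrank F ↥(W ⊓ B.orthogonal A) + finrank F A = d + finrank F ↥(W ⊓ A) := by
  have hperp := finrank_add_finrank_orthogonal_eq hn (W ⊔ A)
  rw [orthogonal_sup, hW.orthogonal_eq hn hV] at hperp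
  have := Submodule.finrank_sup_add_finrank_inf_eq W A
  have := hW.1
  lia

theorem IsTotallyIsotropic.finrank_inf_add_finrank_inf_add_finrank_inf_le (hB : B.IsRefl)
    (hW : IsTotallyIsotropic B W) (hW₁ : IsTotallyIsotropic B W₁)
    (hW₂ : IsTotallyIsotropic B W₂) :
    finrank F ↥(W ⊓ W₁) + finrank F ↥(W ⊓ W₂) + finrank F ↥(W₁ ⊓ W₂) ≤
      d + 2 * finrank F ↥(W ⊓ (W₁ ⊓ W₂)) := by
  have := (isTotallyIsotropic_inf_sup_inf_sup_inf hB hW hW₁ hW₂).finrank_le hn hV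
  have := finrank_inf_sup_inf_sup_inf W W₁ W₂
  lia

theorem exists_isGenerator_finrank_inf_ge (hB : B.IsRefl) {e : ℕ} (hW : IsGenerator B d W)
    (hW₁ : IsTotallyIsotropic B W₁) (hW₂ : IsTotallyIsotropic B W₂)
    (hWW₁ : d ≤ finrank F ↥(W ⊓ W₁) + 2 * e) (hWW₂ : d ≤ finrank F ↥(W ⊓ W₂) + 2 * e)
    (hA : finrank F ↥(W₁ ⊓ W₂) + 2 * e = d) (hWA : finrank F ↥(W ⊓ (W₁ ⊓ W₂)) + 3 * e = d) :
    ∃ G, IsGenerator B d G ∧ W₁ ⊓ W₂ ≤ G ∧ d ≤ finrank F ↥(W ⊓ G) + e := by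
  have hiso := isTotallyIsotropic_inf_sup_inf_sup_inf hB hW.2 hW₁ hW₂
  have hle : W ⊓ W₁ ⊔ W ⊓ W₂ ≤ W ⊓ (W ⊓ W₁ ⊔ W ⊓ W₂ ⊔ W₁ ⊓ W₂) :=
    le_inf (sup_le inf_le_left inf_le_left) le_sup_left
  have := hiso.finrank_le hn hV
  have := finrank_inf_sup_inf_sup_inf W W₁ W₂
  have := finrank_inf_sup_inf W W₁ W₂
  have := Submodule.finrank_mono hle
  exact ⟨_, ⟨by lia, hiso⟩, le_sup_right, by lia⟩

/- The hypotheses force `W ⊓ G = W ⊓ A^⊥`, and `W ⊓ U ≤ A^⊥` because `A` is spanned by vectors of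
`W` and of `U`. -/
theorem IsGenerator.le_finrank_inf_of_le_sup {e : ℕ} {A G : Submodule F V}
    (hW : IsGenerator B d W) (hU : IsTotallyIsotropic B U) (hG : IsTotallyIsotropic B G)
    (hAG : A ≤ G) (hWG : d ≤ finrank F ↥(W ⊓ G) + e) (hWA : finrank F ↥(W ⊓ A) + e = finrank F A)
    (hWU : d ≤ finrank F ↥(W ⊓ U) + 2 * e) (hsup : A ≤ W ⊓ A ⊔ U ⊓ A) :
    d ≤ finrank F ↥(U ⊓ G) + e := by
  have hperp : W ⊓ G = W ⊓ B.orthogonal A := by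
    refine Submodule.eq_of_le_of_finrank_le (inf_le_inf_left W
      (hG.le_orthogonal.trans (LinearMap.BilinForm.orthogonal_le hAG))) ?_
    have := hW.finrank_inf_orthogonal_add hn hV A
    lia
  have hWUA : W ⊓ U ≤ B.orthogonal A := by
    refine le_trans ?_ (LinearMap.BilinForm.orthogonal_le hsup)
    rw [orthogonal_sup]
    exact inf_le_inf (hW.2.le_orthogonal.trans (LinearMap.BilinForm.orthogonal_le inf_le_left))
      (hU.le_orthogonal.trans (LinearMap.BilinForm.orthogonal_le inf_le_left))
  have hWUG : W ⊓ U ≤ G := (le_inf inf_le_left hWUA).trans (hperp.ge.trans inf_le_right)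
  have hle : W ⊓ U ⊔ U ⊓ A ≤ U ⊓ G :=
    sup_le (le_inf inf_le_right hWUG) (inf_le_inf_left U hAG)
  have hinf : W ⊓ U ⊓ (U ⊓ A) ≤ W ⊓ A ⊓ (U ⊓ A) :=
    le_inf (inf_le_inf inf_le_left inf_le_right) inf_le_right
  have := Submodule.finrank_mono hle
  have := Submodule.finrank_mono hinf
  have := Submodule.finrank_mono hsup
  have := Submodule.finrank_sup_add_finrank_inf_eq (W ⊓ U) (U ⊓ A)
  have := Submodule.finrank_sup_add_finrank_inf_eq (W ⊓ A) (U ⊓ A)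
  lia

end Isotropic

section UpperBounds

theorem prod_pow_add_one_le {q : ℕ} (hq : 2 ≤ q) (c : ℕ) :
    ∏ i ∈ Finset.range c, (q ^ (i + 1) + 1) ≤ 3 * q ^ (c + 1).choose 2 := by
  -- The extra summand makes the induction go through.
  have hstrong (n : ℕ) : (∏ i ∈ Finset.range (n + 1), (q ^ (i + 1) + 1)) * q ^ (n + 1) +
      3 * q ^ (n + 2).choose 2 ≤ 3 * q ^ (n + 2).choose 2 * q ^ (n + 1) := by
    induction n with
    | zero =>
      norm_num
      nlinarith
    | succ n ih =>
      have hP := Nat.le_of_mul_le_mul_right (le_of_add_le_left ih) (pow_pos (by lia) (n + 1))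
      rw [Finset.prod_range_succ, Nat.choose_succ_succ' (n + 2) 1, Nat.choose_one_right,
        pow_add q (n + 2), show q ^ (n + 2) = q * q ^ (n + 1) from pow_succ' q (n + 1)]
      set P := ∏ i ∈ Finset.range (n + 1), (q ^ (i + 1) + 1)
      set Q := q ^ (n + 2).choose 2
      set X := q ^ (n + 1)
      have hPQ : P + 3 * Q ≤ q * (3 * Q) := by nlinarith
      calc P * (q * X + 1) * (q * X) + 3 * (q * X * Q)
          = q * X * (q * (P * X) + (P + 3 * Q)) := by ring
        _ ≤ q * X * (q * (P * X) + q * (3 * Q)) := by gcongr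
        _ = q * X * (q * (P * X + 3 * Q)) := by ring
        _ ≤ q * X * (q * (3 * Q * X)) := by gcongr
        _ = 3 * (q * X * Q) * (q * X) := by ring
  rcases c with _ | n
  · simp
  · exact Nat.le_of_mul_le_mul_right (le_of_add_le_left (hstrong n)) (pow_pos (by lia) _)

theorem pow_add_le_pow_mul_pow_sub_one {q : ℕ} (hq : 2 ≤ q) (m k : ℕ) :
    q ^ (m + k) ≤ q ^ m * (q ^ (k + 1) - 1) := by
  rw [pow_add]
  exact Nat.mul_le_mul_left _ (Nat.le_sub_one_of_lt (Nat.pow_lt_pow_right hq k.lt_succ_self))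

variable {F V : Type*} [Field F] [Finite F] [AddCommGroup V] [Module F V] [FiniteDimensional F V]
  {B : LinearMap.BilinForm F V} {d : ℕ} (hn : B.Nondegenerate) (hV : finrank F V = 2 * d)
include hn hV

theorem ncard_setOf_isGenerator_le_le (hB : B.IsAlt) {c : ℕ} {D : Submodule F V}
    (hD : IsTotallyIsotropic B D) (hc : finrank F D + c = d) :
    {W | IsGenerator B d W ∧ D ≤ W}.ncard ≤
      ∏ i ∈ Finset.range c, (Nat.card F ^ (i + 1) + 1) := by
  have : Finite V := Module.finite_of_finite F
  induction c generalizing D with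
  | zero =>
    have heq : ∀ W ∈ {W | IsGenerator B d W ∧ D ≤ W}, D = W := fun W hW =>
      Submodule.eq_of_le_of_finrank_le hW.2 (by rw [hW.1.1]; lia)
    rw [Finset.prod_range_zero]
    exact (Set.ncard_le_one_iff).2 fun ha hb => (heq _ ha).symm.trans (heq _ hb)
  | succ c ih =>
    set q := Nat.card F
    have hpos : 0 < q ^ finrank F D * (q ^ (c + 1) - 1) :=
      Nat.mul_pos (pow_pos Nat.card_pos _)
        (Nat.sub_pos_of_lt (Nat.one_lt_pow c.succ_ne_zero Finite.one_lt_card))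
    have hperp := finrank_add_finrank_orthogonal_eq hn D
    have hsq : q ^ (c + 1 + (c + 1)) - 1 = (q ^ (c + 1) + 1) * (q ^ (c + 1) - 1) := by
      rw [pow_add, ← Nat.mul_self_sub_mul_self_eq, one_mul]
    have key : {W | IsGenerator B d W ∧ D ≤ W}.ncard * (q ^ finrank F D * (q ^ (c + 1) - 1)) ≤
        ((B.orthogonal D : Set V) \ D).ncard * ∏ i ∈ Finset.range c, (q ^ (i + 1) + 1) := by
      refine ncard_mul_le_ncard_mul (fun W x => x ∈ W) ?_ ?_
      · rintro W ⟨hW, hDW⟩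
        rw [← ncard_coe_diff_of_le hDW (hW.1.trans hc.symm)]
        exact Set.ncard_le_ncard fun x hx =>
          ⟨⟨LinearMap.BilinForm.orthogonal_le hDW (hW.2.le_orthogonal hx.1), hx.2⟩, hx.1⟩
      · rintro x ⟨hx, hxD⟩
        refine (Set.ncard_le_ncard ?_).trans (ih (hD.sup_span_singleton hB hx)
          (by rw [Submodule.finrank_sup_span_singleton hxD]; lia))
        rintro W ⟨⟨hW, hDW⟩, hxW⟩
        exact ⟨hW, sup_le hDW ((Submodule.span_singleton_le_iff_mem x W).2 hxW)⟩
    rw [ncard_coe_diff_of_le hD.le_orthogonal (j := c + 1 + (c + 1)) (by lia), hsq] at key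
    rw [Finset.prod_range_succ]
    refine Nat.le_of_mul_le_mul_right (key.trans_eq ?_) hpos
    ring

theorem ncard_setOf_le_finrank_inf_le (hB : B.IsAlt) {m c k : ℕ} (hmc : m + c = d)
    {E : Submodule F V} (hE : IsTotallyIsotropic B E) (hEk : finrank F E = m + k) :
    {W | IsGenerator B d W ∧ m ≤ finrank F ↥(W ⊓ E)}.ncard ≤
      3 * Nat.card F ^ (k * (m + 1) + (c + 1).choose 2) := by
  have : Finite V := Module.finite_of_finite F
  have hq : 2 ≤ Nat.card F := Finite.one_lt_card
  induction k generalizing E with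
  | zero =>
    have hsub : {W | IsGenerator B d W ∧ m ≤ finrank F ↥(W ⊓ E)} ⊆
        {W | IsGenerator B d W ∧ E ≤ W} := fun W hW =>
      ⟨hW.1, inf_eq_right.1 (Submodule.eq_of_le_of_finrank_le inf_le_right (hEk.trans_le hW.2))⟩
    rw [zero_mul, zero_add]
    exact (Set.ncard_le_ncard hsub).trans
      ((ncard_setOf_isGenerator_le_le hn hV hB hE (by lia)).trans (prod_pow_add_one_le hq c))
  | succ k ih =>
    have key := ncard_mul_le_of_hyperplanes (bot_le : ⊥ ≤ E) (b := m + (k + 1)) (j := k + 1)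
      (m := m) (M := 3 * Nat.card F ^ (k * (m + 1) + (c + 1).choose 2)) (by simpa using hEk)
      (S := {W | IsGenerator B d W ∧ m ≤ finrank F ↥(W ⊓ E)}) ?_ fun H hHE hH => ?_
    · set q := Nat.card F
      have hpow : q ^ (m + (k + 1)) - 1 ≤ q ^ (m + 1) * (q ^ (k + 1) - 1) := by
        rw [show m + (k + 1) = m + 1 + k by ring]
        exact (Nat.sub_le _ 1).trans (pow_add_le_pow_mul_pow_sub_one hq (m + 1) k)
      have hpos : 0 < q ^ (k + 1) - 1 := Nat.sub_pos_of_lt (Nat.one_lt_pow k.succ_ne_zero hq)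
      refine Nat.le_of_mul_le_mul_right (key.trans ((Nat.mul_le_mul_right _ hpow).trans_eq ?_)) hpos
      ring
    · rintro W ⟨-, hW⟩
      obtain ⟨U, hU, hUm⟩ := exists_le_finrank_eq (W ⊓ E) hW
      refine ⟨U, hU.trans inf_le_right, bot_le, by lia, ?_⟩
      rw [inf_eq_right.2 (hU.trans inf_le_left), hUm]
    · refine (Set.ncard_le_ncard ?_).trans (ih (hE.mono hHE) (by lia))
      exact fun W hW => ⟨hW.1.1, hW.2⟩

theorem ncard_setOf_not_le_sup_le (hB : B.IsAlt) {m c k : ℕ} (hmc : m + c = d)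
    {A D : Submodule F V} (hA : IsTotallyIsotropic B A) (hAm : finrank F A = m + (k + 1))
    (hDA : D ≤ A) (hD : m ≤ finrank F D) :
    {W | IsGenerator B d W ∧ m ≤ finrank F ↥(W ⊓ A) ∧ ¬ A ≤ W ⊓ A ⊔ D}.ncard ≤
      3 * Nat.card F ^ (k + 1 + k * (m + 1) + (c + 1).choose 2) := by
  have : Finite V := Module.finite_of_finite F
  have hq : 2 ≤ Nat.card F := Finite.one_lt_card
  obtain ⟨b, hb⟩ := Nat.exists_eq_add_of_le (Submodule.finrank_mono hDA)
  have key := ncard_mul_le_of_hyperplanes hDA (j := 1) (m := m)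
    (M := 3 * Nat.card F ^ (k * (m + 1) + (c + 1).choose 2)) hb
    (S := {W | IsGenerator B d W ∧ m ≤ finrank F ↥(W ⊓ A) ∧ ¬ A ≤ W ⊓ A ⊔ D}) ?_ fun H hHA hH => ?_
  · set q := Nat.card F
    have hpow : q ^ b - 1 ≤ q ^ (k + 1) :=
      (Nat.sub_le _ 1).trans (Nat.pow_le_pow_right (by lia) (by lia))
    refine (Nat.le_mul_of_pos_right _ (by rw [pow_one]; lia)).trans
      (key.trans ((Nat.mul_le_mul_right _ hpow).trans_eq ?_))
    ring
  · rintro W ⟨-, hWm, hWs⟩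
    have hle : W ⊓ A ⊔ D ≤ A := sup_le inf_le_right hDA
    exact ⟨_, hle, le_sup_right, Submodule.finrank_lt_finrank_of_lt (hle.lt_of_not_ge hWs),
      hWm.trans (Submodule.finrank_mono (le_inf inf_le_left le_sup_left))⟩
  · refine (Set.ncard_le_ncard ?_).trans
      (ncard_setOf_le_finrank_inf_le hn hV hB hmc (hA.mono hHA) (by lia))
    exact fun W hW => ⟨hW.1.1, hW.2⟩

end UpperBounds

section Gates

variable {F V : Type*} [Field F] [AddCommGroup V] [Module F V] {B : LinearMap.BilinForm F V}
  {d : ℕ} {W G : Submodule F V} {v g : V}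

/-- The gate of the generator `W` among the generators through `v`, in the sense of near polygons:
when `v ∉ W` it is the generator through `v` that meets `W` in a hyperplane. -/
def gate (B : LinearMap.BilinForm F V) (W : Submodule F V) (v : V) : Submodule F V :=
  (W ⊓ LinearMap.ker (B v)) ⊔ F ∙ v

theorem mem_gate (B : LinearMap.BilinForm F V) (W : Submodule F V) (v : V) : v ∈ gate B W v :=
  Submodule.mem_sup_right (Submodule.mem_span_singleton_self v)

theorem gate_inf_ker (hB : B.IsRefl) (hW : IsTotallyIsotropic B W) (hg : g ∈ W) (hvg : B v g ≠ 0) :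
    gate B W v ⊓ LinearMap.ker (B g) = W ⊓ LinearMap.ker (B v) := by
  refine le_antisymm ?_ (le_inf le_sup_left fun x hx => hW g hg x hx.1)
  rintro x ⟨hx, hgx⟩
  obtain ⟨a, ha, b, hb, rfl⟩ := Submodule.mem_sup.1 hx
  obtain ⟨r, rfl⟩ := Submodule.mem_span_singleton.1 hb
  have hgv : B g v ≠ 0 := fun h => hvg (hB.eq_zero h)
  have hr : r = 0 := by simpa [hW g hg a ha.1, hgv] using hgx
  simpa [hr] using ha

variable [FiniteDimensional F V]

theorem IsGenerator.exists_mem_apply_ne_zero (hn : B.Nondegenerate) (hB : B.IsRefl)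
    (hV : finrank F V = 2 * d) (hW : IsGenerator B d W) (hv : v ∉ W) : ∃ x ∈ W, B v x ≠ 0 := by
  by_contra! hcon
  rw [← hW.orthogonal_eq hn hV] at hv
  exact hv fun x hx => hB.eq_zero (hcon x hx)

theorem isGenerator_gate (hn : B.Nondegenerate) (hB : B.IsAlt) (hV : finrank F V = 2 * d)
    (hW : IsGenerator B d W) (hv : v ∉ W) : IsGenerator B d (gate B W v) := by
  have hmem : v ∉ W ⊓ LinearMap.ker (B v) := fun h => hv h.1
  have hiso : IsTotallyIsotropic B (W ⊓ LinearMap.ker (B v)) := hW.2.mono inf_le_left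
  refine ⟨?_, hiso.sup_span_singleton hB fun x hx => hB.isRefl.eq_zero hx.2⟩
  rw [gate, Submodule.finrank_sup_span_singleton hmem,
    finrank_inf_ker_add_one (hW.exists_mem_apply_ne_zero hn hB.isRefl hV hv), hW.1]

theorem gate_gate (hB : B.IsRefl) (hW : IsTotallyIsotropic B W) (hg : g ∈ W) (hvg : B v g ≠ 0) :
    gate B (gate B W v) g = W := by
  have hmem : g ∉ W ⊓ LinearMap.ker (B v) := fun h => hvg h.2
  rw [gate, gate_inf_ker hB hW hg hvg]
  refine Submodule.eq_of_le_of_finrank_eq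
    (sup_le inf_le_left ((Submodule.span_singleton_le_iff_mem g W).2 hg)) ?_
  rw [Submodule.finrank_sup_span_singleton hmem, finrank_inf_ker_add_one ⟨g, hg, hvg⟩]

theorem finrank_gate_inf_add_one (hB : B.IsRefl) (hW : IsTotallyIsotropic B W)
    (hG : IsTotallyIsotropic B G) (hgW : g ∈ W) (hgG : g ∈ G) (hvg : B v g ≠ 0) :
    finrank F ↥(gate B W v ⊓ G) + 1 = finrank F ↥(W ⊓ G) := by
  have hker : G ≤ LinearMap.ker (B g) := fun x hx => hG g hgG x hx
  rw [← inf_eq_right.2 hker, ← inf_assoc, gate_inf_ker hB hW hgW hvg, inf_right_comm,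
    inf_eq_right.2 hker]
  exact finrank_inf_ker_add_one ⟨g, ⟨hgW, hgG⟩, hvg⟩

end Gates

section Spheres

variable {F V : Type*} [Field F] [AddCommGroup V] [Module F V]

/-- The generators at distance `i` from `G` in the dual polar graph, where the distance of two
generators is the codimension of their intersection. -/
def generatorSphere (B : LinearMap.BilinForm F V) (d i : ℕ) (G : Submodule F V) :
    Set (Submodule F V) :=
  {W | IsGenerator B d W ∧ finrank F ↥(W ⊓ G) + i = d}

/-- The generators at distance at most `e` from `G` in the dual polar graph. -/
def generatorBall (B : LinearMap.BilinForm F V) (d e : ℕ) (G : Submodule F V) :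
    Set (Submodule F V) :=
  {W | IsGenerator B d W ∧ d ≤ finrank F ↥(W ⊓ G) + e}

theorem generatorBall_succ (B : LinearMap.BilinForm F V) (d e : ℕ) (G : Submodule F V) :
    generatorBall B d (e + 1) G = generatorBall B d e G ∪ generatorSphere B d (e + 1) G := by
  ext W
  simp only [generatorBall, generatorSphere, Set.mem_union, Set.mem_ofPred_eq, ← and_or_left]
  refine and_congr_right fun _ => ?_
  lia

theorem disjoint_generatorBall_generatorSphere (B : LinearMap.BilinForm F V) (d e : ℕ)
    (G : Submodule F V) :
    Disjoint (generatorBall B d e G) (generatorSphere B d (e + 1) G) :=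
  Set.disjoint_left.2 fun W hW hW' => by have := hW.2; have := hW'.2; lia

variable [FiniteDimensional F V] {B : LinearMap.BilinForm F V} {d i : ℕ} {G G' : Submodule F V}

theorem generatorSphere_zero (hG : IsGenerator B d G) : generatorSphere B d 0 G = {G} := by
  refine Set.eq_singleton_iff_unique_mem.2
    ⟨⟨hG, by rw [inf_idem, add_zero, hG.1]⟩, fun W hW => ?_⟩
  have hWG : W ⊓ G = W := Submodule.eq_of_le_of_finrank_eq inf_le_left (hW.2.trans hW.1.1.symm)
  have hGW : W ⊓ G = G := Submodule.eq_of_le_of_finrank_eq inf_le_right (hW.2.trans hG.1.symm)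
  exact hWG.symm.trans hGW

theorem generatorBall_zero (hG : IsGenerator B d G) : generatorBall B d 0 G = {G} := by
  rw [← generatorSphere_zero hG]
  ext W
  refine and_congr_right fun hW => ?_
  have := Submodule.finrank_mono (inf_le_left : W ⊓ G ≤ W)
  have := hW.1
  lia

variable (hn : B.Nondegenerate) (hB : B.IsAlt) (hV : finrank F V = 2 * d)
include hn hB hV

theorem bijOn_gate (hG : IsTotallyIsotropic B G) {v g : V} (hg : g ∈ G) (hgv : B g v ≠ 0) :
    Set.BijOn (fun W => gate B W v) {W ∈ generatorSphere B d i G | g ∈ W}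
      {W ∈ generatorSphere B d (i + 1) G | v ∈ W} := by
  have hvg : B v g ≠ 0 := fun h => hgv (hB.isRefl.eq_zero h)
  refine Set.InvOn.bijOn (f' := fun W => gate B W g) ⟨?_, ?_⟩ ?_ ?_
  · rintro W ⟨⟨hW, -⟩, hgW⟩
    exact gate_gate hB.isRefl hW.2 hgW hvg
  · rintro W ⟨⟨hW, -⟩, hvW⟩
    exact gate_gate hB.isRefl hW.2 hvW hgv
  · rintro W ⟨⟨hW, hWi⟩, hgW⟩
    have := finrank_gate_inf_add_one hB.isRefl hW.2 hG hgW hg hvg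
    exact ⟨⟨isGenerator_gate hn hB hV hW fun h => hvg (hW.2 v h g hgW), by lia⟩, mem_gate B W v⟩
  · rintro W ⟨⟨hW, hWi⟩, hvW⟩
    have hW' := isGenerator_gate hn hB hV hW fun h => hvg (hW.2 v hvW g h)
    have := finrank_gate_inf_add_one hB.isRefl hW'.2 hG (mem_gate B W g) hg hvg
    rw [gate_gate hB.isRefl hW.2 hvW hgv] at this
    exact ⟨⟨hW', by lia⟩, mem_gate B W g⟩

variable [Finite F]

/- The pairs counted are a generator `W` and a vector `v ∈ W` that is not orthogonal to `g`; for
fixed `v`, the gates biject these `W` with the generators through `g` one step closer to `G`. -/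
theorem ncard_generatorSphere_notMem (hG : IsGenerator B d G) {g : V} (hg : g ∈ G) (hg0 : g ≠ 0) :
    Nat.card F ^ d * {W ∈ generatorSphere B d i G | g ∈ W}.ncard =
      {W ∈ generatorSphere B d (i + 1) G | g ∉ W}.ncard := by
  have : Finite V := Module.finite_of_finite F
  have hd : 0 < d :=
    hG.1 ▸ Submodule.one_le_finrank_iff.2 fun h => hg0 ((Submodule.mem_bot F).1 (h ▸ hg))
  obtain ⟨n, rfl⟩ := Nat.exists_eq_add_one.2 hd
  set q := Nat.card F
  have hq : 1 < q := Finite.one_lt_card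
  have hpos : 0 < q ^ n * (q - 1) :=
    Nat.mul_pos (pow_pos Nat.card_pos n) (Nat.sub_pos_of_lt hq)
  have hvec : {v | B g v ≠ 0}.ncard = q ^ (n + 1 + n) * (q - 1) := by
    have hex : ∃ v ∈ (⊤ : Submodule F V), B g v ≠ 0 := by
      by_contra! hcon
      exact hg0 (hn.1 g fun v => hcon v trivial)
    have h := ncard_setOf_mem_apply_ne_zero hex (n := n + 1 + n) (by rw [finrank_top, hV]; ring)
    simpa using h
  have key := ncard_mul_eq_ncard_mul (s := {W ∈ generatorSphere B (n + 1) (i + 1) G | g ∉ W})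
    (t := {v | B g v ≠ 0}) (fun W v => v ∈ W) (m := q ^ n * (q - 1))
    (n := {W ∈ generatorSphere B (n + 1) i G | g ∈ W}.ncard) ?_ ?_
  · rw [hvec] at key
    refine Nat.eq_of_mul_eq_mul_right hpos (.trans ?_ key.symm)
    ring
  · rintro W ⟨⟨hW, -⟩, hgW⟩
    have hex := hW.exists_mem_apply_ne_zero hn hB.isRefl hV hgW
    rw [← ncard_setOf_mem_apply_ne_zero hex hW.1]
    exact congrArg Set.ncard (Set.ext fun v => and_comm)
  · intro v hv
    rw [(bijOn_gate hn hB hV hG.2 hg hv).ncard_eq]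
    have hgW : ∀ W ∈ generatorSphere B (n + 1) (i + 1) G, v ∈ W → g ∉ W := fun W hW hvW hgW =>
      hv (hW.1.2 g hgW v hvW)
    exact congrArg Set.ncard (Set.ext fun W =>
      ⟨fun hW => ⟨hW.1.1, hW.2⟩, fun hW => ⟨⟨hW.1, hgW W hW.1 hW.2⟩, hW.2⟩⟩)

theorem ncard_generatorSphere_succ (hG : IsGenerator B d G) (hi : i < d) :
    (generatorSphere B d (i + 1) G).ncard * (Nat.card F ^ (i + 1) - 1) =
      (generatorSphere B d i G).ncard *
        (Nat.card F ^ (i + 1) * (Nat.card F ^ (d - i) - 1)) := by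
  have : Finite V := Module.finite_of_finite F
  set q := Nat.card F
  have key := mul_ncard_mul_eq_of_fiber (s := generatorSphere B d i G)
    (s' := generatorSphere B d (i + 1) G) (t := (G : Set V) \ {0})
    (r := fun W g => g ∈ W) (r' := fun W g => g ∉ W)
    (fun g hg => ncard_generatorSphere_notMem hn hB hV hG hg.1 hg.2)
    (m := q ^ (d - i) - 1) (n := q ^ (d - (i + 1)) * (q ^ (i + 1) - 1)) ?_ ?_
  · rw [show q ^ d = q ^ (d - (i + 1)) * q ^ (i + 1) by rw [← pow_add]; congr 1; lia] at key
    have hpos : 0 < q ^ (d - (i + 1)) := pow_pos Nat.card_pos _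
    refine Nat.eq_of_mul_eq_mul_left hpos (.trans ?_ (key.symm.trans ?_)) <;> ring
  · rintro W ⟨-, hWi⟩
    have h := ncard_coe_diff_of_le (bot_le : ⊥ ≤ W ⊓ G) (j := d - i) (by rw [finrank_bot]; lia)
    rw [finrank_bot, pow_zero, one_mul] at h
    rw [← h]
    congr 1
    ext g
    simp [and_comm, and_assoc, and_left_comm]
  · rintro W ⟨-, hWi⟩
    have h := ncard_coe_diff_of_le (inf_le_right : W ⊓ G ≤ G) (j := i + 1) (by rw [hG.1, hWi])
    rw [show d - (i + 1) = finrank F ↥(W ⊓ G) by lia, ← h]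
    congr 1
    ext g
    refine ⟨fun hg => ⟨hg.1.1, fun h => hg.2 h.1⟩, fun hg => ?_⟩
    have hgW : g ∉ W := fun h => hg.2 ⟨h, hg.1⟩
    exact ⟨⟨hg.1, fun h0 => hgW (h0 ▸ W.zero_mem)⟩, hgW⟩

theorem ncard_generatorSphere_eq (hG : IsGenerator B d G) (hG' : IsGenerator B d G') (hi : i ≤ d) :
    (generatorSphere B d i G).ncard = (generatorSphere B d i G').ncard := by
  have hq : 1 < Nat.card F := Finite.one_lt_card
  induction i with
  | zero => simp only [generatorSphere_zero hG, generatorSphere_zero hG', Set.ncard_singleton]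
  | succ i ih =>
    refine Nat.eq_of_mul_eq_mul_right
      (Nat.sub_pos_of_lt (Nat.one_lt_pow i.succ_ne_zero hq)) ?_
    rw [ncard_generatorSphere_succ hn hB hV hG hi, ncard_generatorSphere_succ hn hB hV hG' hi,
      ih (Nat.le_of_succ_le hi)]

theorem ncard_generatorBall_eq {e : ℕ} (hG : IsGenerator B d G) (hG' : IsGenerator B d G')
    (he : e ≤ d) : (generatorBall B d e G).ncard = (generatorBall B d e G').ncard := by
  have : Finite V := Module.finite_of_finite F
  induction e with
  | zero => simp only [generatorBall_zero hG, generatorBall_zero hG', Set.ncard_singleton]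
  | succ e ih =>
    simp only [generatorBall_succ,
      Set.ncard_union_eq (disjoint_generatorBall_generatorSphere B d e _)]
    rw [ih (Nat.le_of_succ_le he), ncard_generatorSphere_eq hn hB hV hG hG' he]

theorem pow_le_ncard_generatorSphere (hG : IsGenerator B d G) (hi : 2 * i ≤ d) :
    Nat.card F ^ (i * (d - i) + (i + 1).choose 2) ≤ (generatorSphere B d i G).ncard := by
  induction i with
  | zero => simp [generatorSphere_zero hG]
  | succ i ih =>
    set q := Nat.card F
    have hq : 1 < q := Finite.one_lt_card
    have hpos : 0 < q ^ (i + 1) - 1 := Nat.sub_pos_of_lt (Nat.one_lt_pow i.succ_ne_zero hq)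
    have hexp : (i + 1) * (d - (i + 1)) + (i + 1 + 1).choose 2 =
        i * (d - i) + (i + 1).choose 2 + (d - i) := by
      obtain ⟨r, rfl⟩ : ∃ r, d = i + 1 + r := Nat.exists_eq_add_of_le (by lia)
      rw [Nat.choose_succ_succ' (i + 1) 1, Nat.choose_one_right, Nat.add_sub_cancel_left,
        show i + 1 + r - i = r + 1 by lia]
      ring
    have hpow : q ^ (d - i) * (q ^ (i + 1) - 1) ≤ q ^ (i + 1) * (q ^ (d - i) - 1) := by
      have : q ^ (i + 1) ≤ q ^ (d - i) := Nat.pow_le_pow_right Nat.card_pos (by lia)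
      rw [Nat.mul_sub, Nat.mul_sub, mul_comm (q ^ (i + 1))]
      lia
    refine Nat.le_of_mul_le_mul_right ?_ hpos
    rw [ncard_generatorSphere_succ hn hB hV hG (by lia), hexp, pow_add, mul_assoc]
    exact Nat.mul_le_mul (ih (by lia)) hpow

end Spheres

section EKR

theorem eight_mul_pow_le {q d k m : ℕ} (hq : 2 ≤ q) (hm : d = m + 3 * (k + 1))
    (hd : 2 * (k + 1) ^ 2 + 6 * (k + 1) + 2 ≤ d) :
    8 * q ^ (k + 1 + k * (m + 1) + (3 * (k + 1) + 1).choose 2) ≤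
      q ^ ((k + 1) * (d - (k + 1)) + (k + 1 + 1).choose 2) := by
  have htri (n : ℕ) : 2 * (n + 1).choose 2 = (n + 1) * n := by
    rw [Nat.choose_two_right, Nat.add_sub_cancel, mul_comm, Nat.div_mul_cancel]
    exact (Nat.even_mul_pred_self (n + 1)).two_dvd
  have hexp : 3 + (k + 1 + k * (m + 1) + (3 * (k + 1) + 1).choose 2) ≤
      (k + 1) * (d - (k + 1)) + (k + 1 + 1).choose 2 := by
    have := htri (3 * (k + 1))
    have := htri (k + 1)
    rw [show d - (k + 1) = m + 2 * (k + 1) by lia]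
    nlinarith
  calc 8 * q ^ (k + 1 + k * (m + 1) + (3 * (k + 1) + 1).choose 2)
      ≤ q ^ 3 * q ^ (k + 1 + k * (m + 1) + (3 * (k + 1) + 1).choose 2) :=
        Nat.mul_le_mul_right _ (Nat.pow_le_pow_left hq 3)
    _ ≤ q ^ ((k + 1) * (d - (k + 1)) + (k + 1 + 1).choose 2) := by
        rw [← pow_add]
        exact Nat.pow_le_pow_right (by lia) hexp

variable {F V : Type*} [Field F] [AddCommGroup V] [Module F V]

/-- The `(d, t)`-EKR sets: sets of generators that pairwise meet in codimension at most `t`. The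
inequality is stated additively, as `d - t` would be truncated. -/
def IsEKR (B : LinearMap.BilinForm F V) (d t : ℕ) (Y : Set (Submodule F V)) : Prop :=
  (∀ W ∈ Y, IsGenerator B d W) ∧ ∀ W₁ ∈ Y, ∀ W₂ ∈ Y, d ≤ finrank F ↥(W₁ ⊓ W₂) + t

variable [FiniteDimensional F V] {B : LinearMap.BilinForm F V} {d e k m : ℕ}
  {Y Z : Set (Submodule F V)} {A G : Submodule F V}

theorem IsGenerator.isEKR_generatorBall (hG : IsGenerator B d G) :
    IsEKR B d (2 * e) (generatorBall B d e G) := by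
  refine ⟨fun W hW => hW.1, fun W₁ hW₁ W₂ hW₂ => ?_⟩
  have := finrank_inf_add_finrank_inf_le W₁ W₂ G
  have := hG.1
  have := hW₁.2
  have := hW₂.2
  lia

variable (hn : B.Nondegenerate) (hV : finrank F V = 2 * d)
include hn hV

theorem IsEKR.exists_isTotallyIsotropic (hB : B.IsRefl) (hZ : IsEKR B d (2 * (k + 1)) Z)
    (hZ0 : Z.Nonempty) (hmk : m + 3 * (k + 1) = d) :
    ∃ A, IsTotallyIsotropic B A ∧ finrank F A = m + (k + 1) ∧
      ((∀ W ∈ Z, m + 1 ≤ finrank F ↥(W ⊓ A)) ∨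
        (∃ W₁ ∈ Z, ∃ W₂ ∈ Z, W₁ ⊓ W₂ = A) ∧ ∀ W ∈ Z, m ≤ finrank F ↥(W ⊓ A)) := by
  obtain ⟨W₀, hW₀⟩ := hZ0
  obtain ⟨⟨W₁, W₂⟩, ⟨hW₁, hW₂⟩, hmin⟩ := exists_minimalFor_of_wellFoundedLT (· ∈ Z ×ˢ Z)
    (fun p => finrank F ↥(p.1 ⊓ p.2)) ⟨(W₀, W₀), hW₀, hW₀⟩
  have hle : ∀ U ∈ Z, ∀ W ∈ Z, finrank F ↥(W₁ ⊓ W₂) ≤ finrank F ↥(U ⊓ W) := fun U hU W hW =>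
    (le_total _ _).elim id (hmin (j := (U, W)) ⟨hU, hW⟩)
  have htriple : ∀ W ∈ Z, 3 * finrank F ↥(W₁ ⊓ W₂) ≤ d + 2 * finrank F ↥(W ⊓ (W₁ ⊓ W₂)) := by
    intro W hW
    have := IsTotallyIsotropic.finrank_inf_add_finrank_inf_add_finrank_inf_le hn hV hB
      (hZ.1 W hW).2 (hZ.1 W₁ hW₁).2 (hZ.1 W₂ hW₂).2
    have := hle W hW W₁ hW₁
    have := hle W hW W₂ hW₂
    lia
  have hiso : IsTotallyIsotropic B (W₁ ⊓ W₂) := (hZ.1 W₁ hW₁).2.mono inf_le_left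
  have hA := hZ.2 W₁ hW₁ W₂ hW₂
  obtain ⟨D, hDA, hD⟩ := exists_le_finrank_eq (W₁ ⊓ W₂) (m := m + (k + 1)) (by lia)
  refine ⟨D, hiso.mono hDA, hD, ?_⟩
  rcases (Submodule.finrank_mono hDA).eq_or_lt with heq | hlt
  · obtain rfl := Submodule.eq_of_le_of_finrank_eq hDA heq
    refine .inr ⟨⟨W₁, hW₁, W₂, hW₂, rfl⟩, fun W hW => ?_⟩
    have := htriple W hW
    lia
  · refine .inl fun W hW => ?_
    have := htriple W hW
    have := finrank_inf_add_finrank_inf_le W D (W₁ ⊓ W₂)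
    rw [inf_eq_left.2 hDA] at this
    lia

theorem IsEKR.subset_generatorBall_or_exists_cover (hB : B.IsRefl)
    (hZ : IsEKR B d (2 * e) Z) {W₁ W₂ : Submodule F V} (hW₁ : W₁ ∈ Z) (hW₂ : W₂ ∈ Z)
    (hA : finrank F ↥(W₁ ⊓ W₂) + 2 * e = d) (hme : m + 3 * e = d)
    (hZA : ∀ W ∈ Z, m ≤ finrank F ↥(W ⊓ (W₁ ⊓ W₂))) :
    (∃ G, IsGenerator B d G ∧ Z ⊆ generatorBall B d e G) ∨
      ∃ U₁ ∈ Z, ∃ U₂ ∈ Z, ∀ W ∈ Z, m + 1 ≤ finrank F ↥(W ⊓ (W₁ ⊓ W₂)) ∨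
        ¬ W₁ ⊓ W₂ ≤ W ⊓ (W₁ ⊓ W₂) ⊔ U₁ ⊓ (W₁ ⊓ W₂) ∨
        ¬ W₁ ⊓ W₂ ≤ W ⊓ (W₁ ⊓ W₂) ⊔ U₂ ⊓ (W₁ ⊓ W₂) := by
  by_cases hsmall : ∃ U ∈ Z, finrank F ↥(U ⊓ (W₁ ⊓ W₂)) = m
  · obtain ⟨U, hU, hUA⟩ := hsmall
    obtain ⟨G, hG, hAG, hUG⟩ := exists_isGenerator_finrank_inf_ge hn hV hB (hZ.1 U hU)
      (hZ.1 W₁ hW₁).2 (hZ.1 W₂ hW₂).2 (hZ.2 U hU W₁ hW₁) (hZ.2 U hU W₂ hW₂) hA (by lia)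
    have hspread {W W' : Submodule F V} (hW : W ∈ Z) (hW' : W' ∈ Z)
        (hWG : d ≤ finrank F ↥(W ⊓ G) + e) (hWA : finrank F ↥(W ⊓ (W₁ ⊓ W₂)) = m)
        (hsup : W₁ ⊓ W₂ ≤ W ⊓ (W₁ ⊓ W₂) ⊔ W' ⊓ (W₁ ⊓ W₂)) : d ≤ finrank F ↥(W' ⊓ G) + e :=
      (hZ.1 W hW).le_finrank_inf_of_le_sup hn hV (hZ.1 W' hW').2 hG.2 hAG hWG (by lia)
        (hZ.2 W hW W' hW') hsup
    by_cases hball : Z ⊆ generatorBall B d e G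
    · exact .inl ⟨G, hG, hball⟩
    · obtain ⟨U', hU', hU'G⟩ := Set.not_subset.1 hball
      refine .inr ⟨U, hU, U', hU', fun W hW => ?_⟩
      by_contra! hcon
      have hWA : finrank F ↥(W ⊓ (W₁ ⊓ W₂)) = m := by have := hZA W hW; lia
      have hWG := hspread hU hW hUG hUA (sup_comm (W ⊓ (W₁ ⊓ W₂)) _ ▸ hcon.2.1)
      exact hU'G ⟨hZ.1 U' hU', hspread hW hU' hWG hWA hcon.2.2⟩
  · push Not at hsmall
    exact .inr ⟨W₁, hW₁, W₂, hW₂, fun W hW => .inl ((hZA W hW).lt_of_ne (hsmall W hW).symm)⟩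

variable [Finite F]

theorem two_mul_ncard_le_of_succ_le_finrank_inf (hB : B.IsAlt) (hmk : m + 3 * (k + 1) = d)
    (hA : IsTotallyIsotropic B A) (hAm : finrank F A = m + (k + 1))
    (hZ : ∀ W ∈ Z, IsGenerator B d W ∧ m + 1 ≤ finrank F ↥(W ⊓ A)) :
    2 * Z.ncard ≤ 3 * Nat.card F ^ (k + 1 + k * (m + 1) + (3 * (k + 1) + 1).choose 2) := by
  have : Finite V := Module.finite_of_finite F
  set q := Nat.card F
  have hq : 2 ≤ q := Finite.one_lt_card
  have hexp : k * (m + 1 + 1) + (3 * k + 2 + 1).choose 2 + 1 ≤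
      k + 1 + k * (m + 1) + (3 * (k + 1) + 1).choose 2 := by
    rw [show 3 * (k + 1) + 1 = 3 * k + 3 + 1 by ring, Nat.choose_succ_succ' (3 * k + 3) 1,
      Nat.choose_one_right]
    lia
  have hsub : Z ⊆ {W | IsGenerator B d W ∧ m + 1 ≤ finrank F ↥(W ⊓ A)} := hZ
  calc 2 * Z.ncard
      ≤ 2 * (3 * q ^ (k * (m + 1 + 1) + (3 * k + 2 + 1).choose 2)) := by
        gcongr
        exact (Set.ncard_le_ncard hsub).trans
          (ncard_setOf_le_finrank_inf_le hn hV hB (by lia) hA (by lia))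
    _ ≤ 3 * q ^ (k * (m + 1 + 1) + (3 * k + 2 + 1).choose 2 + 1) := by
        rw [pow_succ]
        nlinarith [Nat.zero_le (q ^ (k * (m + 1 + 1) + (3 * k + 2 + 1).choose 2))]
    _ ≤ 3 * q ^ (k + 1 + k * (m + 1) + (3 * (k + 1) + 1).choose 2) := by
        gcongr
        lia

theorem IsEKR.subset_generatorBall_or_two_mul_ncard_le (hB : B.IsAlt)
    (hZ : IsEKR B d (2 * (k + 1)) Z) (hZ0 : Z.Nonempty) (hmk : m + 3 * (k + 1) = d) :
    (∃ G, IsGenerator B d G ∧ Z ⊆ generatorBall B d (k + 1) G) ∨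
      2 * Z.ncard ≤ 15 * Nat.card F ^ (k + 1 + k * (m + 1) + (3 * (k + 1) + 1).choose 2) := by
  have : Finite V := Module.finite_of_finite F
  obtain ⟨A, hA, hAm, hlarge | ⟨⟨W₁, hW₁, W₂, hW₂, rfl⟩, hZA⟩⟩ :=
    hZ.exists_isTotallyIsotropic hn hV hB.isRefl hZ0 hmk
  · have := two_mul_ncard_le_of_succ_le_finrank_inf hn hV hB hmk hA hAm
      fun W hW => ⟨hZ.1 W hW, hlarge W hW⟩
    exact .inr (by lia)
  refine (hZ.subset_generatorBall_or_exists_cover hn hV hB.isRefl hW₁ hW₂ (by lia) hmk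
    hZA).imp_right ?_
  rintro ⟨U₁, hU₁, U₂, hU₂, hcover⟩
  set A := W₁ ⊓ W₂
  let T : Set (Submodule F V) := {W | IsGenerator B d W ∧ m + 1 ≤ finrank F ↥(W ⊓ A)}
  let S (U : Submodule F V) : Set (Submodule F V) :=
    {W | IsGenerator B d W ∧ m ≤ finrank F ↥(W ⊓ A) ∧ ¬ A ≤ W ⊓ A ⊔ U ⊓ A}
  have hsub : Z ⊆ T ∪ (S U₁ ∪ S U₂) := fun W hW =>
    (hcover W hW).imp (⟨hZ.1 W hW, ·⟩) (.imp (⟨hZ.1 W hW, hZA W hW, ·⟩) (⟨hZ.1 W hW, hZA W hW, ·⟩))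
  have hcard := (Set.ncard_le_ncard hsub).trans ((Set.ncard_union_le _ _).trans
    (Nat.add_le_add_left (Set.ncard_union_le _ _) _))
  have hT : 2 * T.ncard ≤ _ :=
    two_mul_ncard_le_of_succ_le_finrank_inf hn hV hB hmk hA hAm fun W hW => hW
  have hS : ∀ U ∈ Z, (S U).ncard ≤ _ := fun U hU =>
    ncard_setOf_not_le_sup_le hn hV hB hmk hA hAm inf_le_right (hZA U hU)
  have := hS U₁ hU₁
  have := hS U₂ hU₂
  lia

theorem IsEKR.subset_generatorBall_or_ncard_lt (hB : B.IsAlt) (hZ : IsEKR B d (2 * e) Z)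
    (he : 2 * e ^ 2 + 6 * e + 2 ≤ d) :
    (∃ G, IsGenerator B d G ∧ Z ⊆ generatorBall B d e G) ∨
      ∀ G, IsGenerator B d G → Z.ncard < (generatorBall B d e G).ncard := by
  have : Finite V := Module.finite_of_finite F
  rcases Z.eq_empty_or_nonempty with rfl | ⟨W, hW⟩
  · exact .inl ((exists_isGenerator hn hV hB).imp fun G hG => ⟨hG, Set.empty_subset _⟩)
  rcases e with _ | k
  · exact .inl ⟨W, hZ.1 W hW, fun U hU => ⟨hZ.1 U hU, hZ.2 U hU W hW⟩⟩
  obtain ⟨m, hm⟩ := Nat.exists_eq_add_of_le' (show 3 * (k + 1) ≤ d by nlinarith)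
  refine (hZ.subset_generatorBall_or_two_mul_ncard_le hn hV hB ⟨W, hW⟩ hm.symm).imp_right
    fun hcard G hG => ?_
  have hsub : generatorSphere B d (k + 1) G ⊆ generatorBall B d (k + 1) G :=
    fun U hU => ⟨hU.1, hU.2.ge⟩
  have := (pow_le_ncard_generatorSphere hn hB hV hG (by lia)).trans (Set.ncard_le_ncard hsub)
  have := eight_mul_pow_le (q := Nat.card F) Finite.one_lt_card hm he
  have : 0 < Nat.card F ^ (k + 1 + k * (m + 1) + (3 * (k + 1) + 1).choose 2) :=
    pow_pos Nat.card_pos _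
  lia

end EKR

theorem stmt18_general {F V : Type*} [Field F] [Finite F] [AddCommGroup V] [Module F V]
    [FiniteDimensional F V] {d t : ℕ} (hV : finrank F V = 2 * d) {B : LinearMap.BilinForm F V}
    (hn : B.Nondegenerate) (hB : B.IsAlt) (ht : Even t) (htd : t ^ 2 + 6 * t + 4 ≤ 2 * d)
    {Y : Set (Submodule F V)} (hY : IsEKR B d t Y) :
    (∀ Z, IsEKR B d t Z → Z.ncard ≤ Y.ncard) ↔
      ∃ G, IsGenerator B d G ∧ Y = generatorBall B d (t / 2) G := by
  have : Finite V := Module.finite_of_finite F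
  obtain ⟨e, rfl⟩ := ht.two_dvd
  rw [Nat.mul_div_cancel_left e two_pos]
  have he : 2 * e ^ 2 + 6 * e + 2 ≤ d := by lia
  constructor
  · intro hmax
    rcases hY.subset_generatorBall_or_ncard_lt hn hV hB he with ⟨G, hG, hYG⟩ | hlt
    · exact ⟨G, hG, Set.eq_of_subset_of_ncard_le hYG (hmax _ hG.isEKR_generatorBall)⟩
    · obtain ⟨G, hG⟩ := exists_isGenerator hn hV hB
      exact absurd (hmax _ hG.isEKR_generatorBall) (hlt G hG).not_ge
  · rintro ⟨G, hG, rfl⟩ Z hZ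
    rcases hZ.subset_generatorBall_or_ncard_lt hn hV hB he with ⟨G', hG', hZG'⟩ | hlt
    · exact (Set.ncard_le_ncard hZG').trans_eq (ncard_generatorBall_eq hn hB hV hG' hG (by lia))
    · exact (hlt G hG).le

theorem stmt18 (F : Type*) [Field F] [Fintype F] (hq : 3 ≤ Fintype.card F)
    (V : Type*) [AddCommGroup V] [Module F V] [FiniteDimensional F V]
    (d t : ℕ) (hV : Module.finrank F V = 2 * d)
    (B : LinearMap.BilinForm F V) (hBnd : B.Nondegenerate)
    (hBalt : ∀ x : V, B x x = 0)
    (ht : Even t) (htd : 5 * (t + 2) ^ 2 ≤ 8 * d)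
    (Y : Set (Submodule F V))
    (hYgen : ∀ W ∈ Y, Module.finrank F W = d ∧ ∀ x ∈ W, ∀ y ∈ W, B x y = 0)
    (hYekr : ∀ W₁ ∈ Y, ∀ W₂ ∈ Y, d - t ≤ Module.finrank F ↥(W₁ ⊓ W₂)) :
    (∀ Z : Set (Submodule F V),
        (∀ W ∈ Z, Module.finrank F W = d ∧ ∀ x ∈ W, ∀ y ∈ W, B x y = 0) →
        (∀ W₁ ∈ Z, ∀ W₂ ∈ Z, d - t ≤ Module.finrank F ↥(W₁ ⊓ W₂)) →
        Z.ncard ≤ Y.ncard)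
      ↔ ∃ G : Submodule F V,
          (Module.finrank F G = d ∧ ∀ x ∈ G, ∀ y ∈ G, B x y = 0) ∧
          Y = {W : Submodule F V |
                (Module.finrank F W = d ∧ ∀ x ∈ W, ∀ y ∈ W, B x y = 0) ∧
                d - t / 2 ≤ Module.finrank F ↥(W ⊓ G)} := by
  simpa only [IsEKR, IsGenerator, IsTotallyIsotropic, generatorBall, and_imp, tsub_le_iff_right]
    using stmt18_general hV hBnd hBalt ht (by nlinarith)
      ⟨hYgen, by simpa only [tsub_le_iff_right] using hYekr⟩
end

section
/- Let q ≥ 3 be a prime power and let t and d be integers with t odd, t ≥ 1, and t ≤ √(8d/5) − 2 (equivalently, 5(t+2)² ≤ 8d). Then a (d,t)-EKR set Y of generators of the symplectic polar space W(2d−1,q) has maximum cardinality among all (d,t)-EKR sets if and only if there exists a (d−1)-dimensional totally isotropic subspace U of V (i.e., B(x,y) = 0 for all x, y ∈ U) such that Y is exactly the set of all generators W with dim(W ∩ U) ≥ d − (t+1)/2. -/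
/-!
Let `t = 2 * s + 1` and take `W₀`, `W₁` in a maximum EKR set `Y` at maximal distance: the gate in
`W₀ ⊓ W₁` of any member of `Y` is within distance `s` of it. As few generators pass through
`W₀ ⊓ W₁`, some generator `A` has a large part of `Y` within distance `s`. The spheres around `A`
grow so fast that their sizes decide everything. A member of `Y` at distance `r ≥ s + 2` from `A`
would force every `A ⊔ C` with `C` in `Y` at distance `s` from `A` to meet a fixed space of
dimension `d + r` outside `A`, which leaves too few such `C`; so `Y` lies within distance `s + 1`.
For members `C`, `C'` at distance exactly `s + 1` the spaces `A ⊔ C` and `A ⊔ C'` meet outside `A`,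
and again there are too few of them unless all the `A ⊔ C` share a vector `v ∉ A`. In that case `Y`
is contained in the extremal example of the hyperplane `(A ⊔ ⟨v⟩)ᗮ` of `A`. The relative sizes are
controlled by double counting and the transitivity of the isometry group on pairs `A ≤ E` with `A` a
generator, so no sphere has to be counted exactly.
-/

open Module Submodule
open LinearMap (BilinForm)

namespace SymplecticEKR

variable {F V : Type*} [Field F] [AddCommGroup V] [Module F V] {B : BilinForm F V}
  {A A' C C' E E' K L L' P U U' W X : Submodule F V} {Y Z 𝒞 : Set (Submodule F V)}
  {d k l m n r s t : ℕ}

/-! ### Symplectic spaces and Lagrangians -/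

lemma orthogonal_sup (W₁ W₂ : Submodule F V) :
    B.orthogonal (W₁ ⊔ W₂) = B.orthogonal W₁ ⊓ B.orthogonal W₂ := by
  refine le_antisymm (le_inf (BilinForm.orthogonal_le le_sup_left)
    (BilinForm.orthogonal_le le_sup_right)) fun v hv w hw ↦ ?_
  obtain ⟨w₁, hw₁, w₂, hw₂, rfl⟩ := mem_sup.1 hw
  rw [map_add, LinearMap.add_apply, hv.1 w₁ hw₁, hv.2 w₂ hw₂, add_zero]

lemma le_orthogonal_comm (hB : B.IsRefl) : A ≤ B.orthogonal C ↔ C ≤ B.orthogonal A :=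
  ⟨fun h c hc _ ha ↦ hB _ _ (h ha c hc), fun h a ha _ hc ↦ hB _ _ (h hc a ha)⟩

lemma span_singleton_le_orthogonal (hB : B.IsAlt) (v : V) : F ∙ v ≤ B.orthogonal (F ∙ v) := by
  intro x hx y hy
  obtain ⟨a, rfl⟩ := mem_span_singleton.1 hx
  obtain ⟨b, rfl⟩ := mem_span_singleton.1 hy
  simp [hB.self_eq_zero]

lemma sup_span_singleton_le_orthogonal (hB : B.IsAlt) {v : V} (hU : U ≤ B.orthogonal U)
    (hv : v ∈ B.orthogonal U) : U ⊔ F ∙ v ≤ B.orthogonal (U ⊔ F ∙ v) := by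
  have hvU : F ∙ v ≤ B.orthogonal U := (span_singleton_le_iff_mem _ _).2 hv
  rw [orthogonal_sup]
  exact sup_le (le_inf hU ((le_orthogonal_comm hB.isRefl).1 hvU))
    (le_inf hvU (span_singleton_le_orthogonal hB v))

/-- `B` is a nondegenerate alternating form on a space of dimension `2 * d`. -/
structure IsSymplectic (B : BilinForm F V) (d : ℕ) : Prop where
  nondegenerate : B.Nondegenerate
  isAlt : B.IsAlt
  finrank_eq : finrank F V = 2 * d

/-- A Lagrangian is a subspace equal to its orthogonal. On a symplectic space of dimension `2 * d`
these are the generators of the polar space, see `IsSymplectic.isLagrangian_iff`. Isotropy of `U`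
is written `U ≤ B.orthogonal U` throughout. -/
def IsLagrangian (B : BilinForm F V) (W : Submodule F V) : Prop :=
  B.orthogonal W = W

lemma IsLagrangian.le_orthogonal (hW : IsLagrangian B W) (hU : U ≤ W) : U ≤ B.orthogonal U :=
  hU.trans (hW.ge.trans (BilinForm.orthogonal_le hU))

lemma le_orthogonal_self_iff :
    U ≤ B.orthogonal U ↔ ∀ x ∈ U, ∀ y ∈ U, B x y = 0 :=
  ⟨fun hU x hx _ hy ↦ hU hy x hx, fun hU _ hx _ hy ↦ hU _ hy _ hx⟩

section FiniteDimensional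

variable [FiniteDimensional F V]

namespace IsSymplectic

lemma orthogonal_orthogonal (hB : IsSymplectic B d) (W : Submodule F V) :
    B.orthogonal (B.orthogonal W) = W :=
  BilinForm.orthogonal_orthogonal hB.nondegenerate hB.isAlt.isRefl W

lemma orthogonal_inf (hB : IsSymplectic B d) (W₁ W₂ : Submodule F V) :
    B.orthogonal (W₁ ⊓ W₂) = B.orthogonal W₁ ⊔ B.orthogonal W₂ := by
  rw [← hB.orthogonal_orthogonal (B.orthogonal W₁ ⊔ B.orthogonal W₂), orthogonal_sup,
    hB.orthogonal_orthogonal, hB.orthogonal_orthogonal]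

lemma finrank_add_finrank_orthogonal (hB : IsSymplectic B d) (W : Submodule F V) :
    finrank F W + finrank F (B.orthogonal W) = 2 * d := by
  have hW := W.finrank_le
  rw [BilinForm.finrank_orthogonal hB.nondegenerate]
  have := hB.finrank_eq
  lia

lemma finrank_eq_of_isLagrangian (hB : IsSymplectic B d) (hW : IsLagrangian B W) :
    finrank F W = d := by
  have h := hB.finrank_add_finrank_orthogonal W
  rw [hW] at h
  lia

lemma exists_notMem (hB : IsSymplectic B d) (hA : IsLagrangian B A) (hd : 0 < d) :
    ∃ v, v ∉ A := by
  by_contra! h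
  have h' := hB.finrank_eq_of_isLagrangian hA
  rw [eq_top_iff'.2 h, finrank_top, hB.finrank_eq] at h'
  lia

lemma isLagrangian_iff (hB : IsSymplectic B d) :
    IsLagrangian B W ↔ finrank F W = d ∧ ∀ x ∈ W, ∀ y ∈ W, B x y = 0 := by
  refine ⟨fun hW ↦ ⟨hB.finrank_eq_of_isLagrangian hW, fun x hx y hy ↦ hW.ge hy x hx⟩,
    fun ⟨hdim, hW⟩ ↦ ?_⟩
  have hle : W ≤ B.orthogonal W := fun y hy x hx ↦ hW x hx y hy
  have hsum := hB.finrank_add_finrank_orthogonal W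
  rw [hdim] at hsum
  exact (eq_of_le_of_finrank_eq hle (hdim.trans (by lia))).symm

lemma exists_isLagrangian (hB : IsSymplectic B d) : ∃ A, IsLagrangian B A := by
  obtain ⟨A, hA⟩ := exists_maximal_of_wellFoundedGT (fun U ↦ U ≤ B.orthogonal U) ⟨⊥, bot_le⟩
  refine ⟨A, le_antisymm (fun v hv ↦ ?_) hA.prop⟩
  exact hA.le_of_ge (sup_span_singleton_le_orthogonal hB.isAlt hA.prop hv) le_sup_left
    (mem_sup_right (mem_span_singleton_self v))

/-- A maximal isotropic subspace disjoint from `A` is the required complement. -/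
lemma exists_isLagrangian_isCompl (hB : IsSymplectic B d) (hA : IsLagrangian B A) :
    ∃ L, IsLagrangian B L ∧ IsCompl A L := by
  obtain ⟨L, hL⟩ := exists_maximal_of_wellFoundedGT
    (fun U ↦ U ≤ B.orthogonal U ∧ Disjoint A U) ⟨⊥, bot_le, disjoint_bot_right⟩
  obtain ⟨hLL, hAL⟩ := hL.prop
  have hle : B.orthogonal L ≤ A ⊔ L := by
    by_contra h
    obtain ⟨v, hv, hvAL⟩ := SetLike.not_le_iff_exists.1 h
    have hdisj : Disjoint A (L ⊔ F ∙ v) :=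
      hAL.disjoint_sup_right_of_disjoint_sup_left (disjoint_span_singleton_of_notMem hvAL)
    have hmax := hL.le_of_ge ⟨sup_span_singleton_le_orthogonal hB.isAlt hLL hv, hdisj⟩ le_sup_left
    exact hvAL (mem_sup_right (hmax (mem_sup_right (mem_span_singleton_self v))))
  have hinf : A ⊓ B.orthogonal L ≤ L := calc
    A ⊓ B.orthogonal L = B.orthogonal (A ⊔ L) := by rw [orthogonal_sup, hA]
    _ ≤ B.orthogonal (B.orthogonal L) := BilinForm.orthogonal_le hle
    _ = L := hB.orthogonal_orthogonal L
  have hLag : IsLagrangian B L := by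
    refine le_antisymm ?_ hLL
    calc B.orthogonal L = (A ⊔ L) ⊓ B.orthogonal L := (inf_eq_right.2 hle).symm
      _ = L ⊔ A ⊓ B.orthogonal L := by rw [sup_comm, sup_inf_assoc_of_le _ hLL]
      _ ≤ L := sup_le le_rfl hinf
  refine ⟨L, hLag, hAL, codisjoint_iff.2 ?_⟩
  rw [← hA, ← hLag, ← hB.orthogonal_inf, hAL.eq_bot, BilinForm.orthogonal_bot]

end IsSymplectic

/-! ### Distance -/

/-- The distance of two generators in the dual polar graph: the codimension of `A ⊓ C` in `A`. -/
noncomputable def polarDist (A C : Submodule F V) : ℕ :=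
  finrank F A - finrank F ↥(A ⊓ C)

lemma finrank_inf_add_polarDist (A C : Submodule F V) :
    finrank F ↥(A ⊓ C) + polarDist A C = finrank F A :=
  Nat.add_sub_cancel' (finrank_mono inf_le_left)

lemma finrank_inf_add_finrank_inf_le (W₁ W₂ U : Submodule F V) :
    finrank F ↥(W₁ ⊓ U) + finrank F ↥(W₂ ⊓ U) ≤ finrank F U + finrank F ↥(W₁ ⊓ W₂) := by
  rw [← finrank_sup_add_finrank_inf_eq]
  exact add_le_add (finrank_mono (sup_le inf_le_right inf_le_right))
    (finrank_mono (inf_le_inf inf_le_left inf_le_left))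

namespace IsSymplectic

lemma polarDist_comm (hB : IsSymplectic B d) (hA : IsLagrangian B A) (hC : IsLagrangian B C) :
    polarDist A C = polarDist C A := by
  rw [polarDist, polarDist, inf_comm, hB.finrank_eq_of_isLagrangian hA,
    hB.finrank_eq_of_isLagrangian hC]

lemma finrank_sup_eq_add_polarDist (hB : IsSymplectic B d) (hA : IsLagrangian B A)
    (hC : IsLagrangian B C) : finrank F ↥(A ⊔ C) = d + polarDist A C := by
  have h₁ := finrank_sup_add_finrank_inf_eq A C
  have h₂ := finrank_inf_add_polarDist A C
  rw [hB.finrank_eq_of_isLagrangian hA] at h₁ h₂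
  rw [hB.finrank_eq_of_isLagrangian hC] at h₁
  lia

lemma polarDist_triangle (hB : IsSymplectic B d) (hA : IsLagrangian B A) (hC : IsLagrangian B C)
    (hW : IsLagrangian B W) : polarDist A C ≤ polarDist A W + polarDist W C := by
  have h := finrank_inf_add_finrank_inf_le A C W
  have h₁ := finrank_inf_add_polarDist A C
  have h₂ := finrank_inf_add_polarDist A W
  have h₃ := finrank_inf_add_polarDist C W
  rw [hB.finrank_eq_of_isLagrangian hA] at h₁ h₂
  rw [hB.finrank_eq_of_isLagrangian hC, hB.polarDist_comm hC hW] at h₃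
  rw [hB.finrank_eq_of_isLagrangian hW] at h
  lia

/-- A generator lies on a geodesic between `C` and `C'` when it is spanned by its intersections
with them. -/
lemma polarDist_add_polarDist_of_le_sup (hB : IsSymplectic B d) (hA : IsLagrangian B A)
    (hC : IsLagrangian B C) (hC' : IsLagrangian B C') (h : A ≤ A ⊓ C ⊔ A ⊓ C') :
    polarDist C A + polarDist A C' = polarDist C C' := by
  have hle : C ⊓ C' ≤ A := calc
    C ⊓ C' = B.orthogonal (C ⊔ C') := by rw [orthogonal_sup, hC, hC']
    _ ≤ B.orthogonal A :=
      BilinForm.orthogonal_le (h.trans (sup_le_sup inf_le_right inf_le_right))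
    _ = A := hA
  have hdim := finrank_sup_add_finrank_inf_eq (A ⊓ C) (A ⊓ C')
  rw [h.antisymm' (sup_le inf_le_left inf_le_left), ← inf_inf_distrib_left,
    inf_eq_right.2 hle] at hdim
  have h₁ := finrank_inf_add_polarDist A C
  have h₂ := finrank_inf_add_polarDist A C'
  have h₃ := finrank_inf_add_polarDist C C'
  rw [hB.finrank_eq_of_isLagrangian hA] at hdim h₁ h₂
  rw [hB.finrank_eq_of_isLagrangian hC] at h₃
  rw [hB.polarDist_comm hC hA]
  lia

lemma le_inf_sup_inf_of_inf_le (hB : IsSymplectic B d) (hA : IsLagrangian B A)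
    (hC : IsLagrangian B C) (hC' : IsLagrangian B C') (h : (A ⊔ C) ⊓ (A ⊔ C') ≤ A) :
    A ≤ A ⊓ C ⊔ A ⊓ C' := calc
  A = B.orthogonal A := hA.symm
  _ ≤ B.orthogonal ((A ⊔ C) ⊓ (A ⊔ C')) := BilinForm.orthogonal_le h
  _ = A ⊓ C ⊔ A ⊓ C' := by rw [hB.orthogonal_inf, orthogonal_sup, orthogonal_sup, hA, hC, hC']

end IsSymplectic

/-! ### Gates -/

/-- The gate of `C` in the set of generators through an isotropic `P`: the nearest such
generator. -/
def gate (B : BilinForm F V) (P C : Submodule F V) : Submodule F V :=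
  P ⊔ B.orthogonal P ⊓ C

omit [FiniteDimensional F V] in
lemma le_gate : P ≤ gate B P C :=
  le_sup_left

lemma finrank_sup_span_singleton {v : V} (hv : v ∉ W) :
    finrank F ↥(W ⊔ F ∙ v) = finrank F W + 1 := by
  have h := finrank_sup_add_finrank_inf_eq W (F ∙ v)
  rwa [(disjoint_span_singleton_of_notMem hv).eq_bot, finrank_bot, add_zero,
    finrank_span_singleton (ne_of_mem_of_not_mem W.zero_mem hv).symm] at h

namespace IsSymplectic

lemma isLagrangian_gate (hB : IsSymplectic B d) (hP : P ≤ B.orthogonal P)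
    (hC : IsLagrangian B C) : IsLagrangian B (gate B P C) := by
  rw [IsLagrangian, gate, orthogonal_sup, hB.orthogonal_inf, hB.orthogonal_orthogonal, hC,
    inf_comm, sup_inf_assoc_of_le _ hP, inf_comm]

lemma polarDist_gate_add_polarDist (hB : IsSymplectic B d) (hP : P ≤ B.orthogonal P)
    (hC : IsLagrangian B C) (hW : IsLagrangian B W) (hPW : P ≤ W) :
    polarDist C (gate B P C) + polarDist (gate B P C) W = polarDist C W :=
  hB.polarDist_add_polarDist_of_le_sup (hB.isLagrangian_gate hP hC) hC hW <|
    sup_le (le_sup_of_le_right (le_inf le_gate hPW))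
      (le_sup_of_le_left (le_inf le_sup_right inf_le_right))

lemma exists_isLagrangian_ge (hB : IsSymplectic B d) (hU : U ≤ B.orthogonal U) :
    ∃ A, IsLagrangian B A ∧ U ≤ A := by
  obtain ⟨C, hC⟩ := hB.exists_isLagrangian
  exact ⟨gate B U C, hB.isLagrangian_gate hU hC, le_gate⟩

lemma finrank_orthogonal_sup_span_singleton (hB : IsSymplectic B d) (hA : IsLagrangian B A) {v : V}
    (hv : v ∉ A) : finrank F (B.orthogonal (A ⊔ F ∙ v)) + 1 = d := by
  have h := hB.finrank_add_finrank_orthogonal (A ⊔ F ∙ v)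
  rw [finrank_sup_span_singleton hv, hB.finrank_eq_of_isLagrangian hA] at h
  lia

lemma exists_sup_eq_sup_span_singleton (hB : IsSymplectic B d) (hA : IsLagrangian B A) {v : V}
    (hv : v ∉ A) :
    ∃ A', IsLagrangian B A' ∧ polarDist A A' = 1 ∧ A ⊔ A' = A ⊔ F ∙ v := by
  have hA' := hB.isLagrangian_gate (span_singleton_le_orthogonal hB.isAlt v) hA
  have hsup : A ⊔ gate B (F ∙ v) A = A ⊔ F ∙ v := by
    rw [gate, sup_left_comm, inf_comm, sup_inf_self, sup_comm]
  refine ⟨gate B (F ∙ v) A, hA', ?_, hsup⟩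
  have h := hB.finrank_sup_eq_add_polarDist hA hA'
  rw [hsup, finrank_sup_span_singleton hv, hB.finrank_eq_of_isLagrangian hA] at h
  lia

/-- The center is the gate of `C` in the intersection of two generators at maximal distance. -/
lemma exists_near_generator (hB : IsSymplectic B d) {W₀ W₁ : Submodule F V}
    (hW₀ : IsLagrangian B W₀) (hW₁ : IsLagrangian B W₁) (hC : IsLagrangian B C)
    (h₁ : polarDist C W₁ ≤ polarDist W₁ W₀) (h₀ : polarDist C W₀ ≤ polarDist W₁ W₀)
    (hs : polarDist W₁ W₀ ≤ 2 * s + 1) :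
    ∃ A, IsLagrangian B A ∧ W₀ ⊓ W₁ ≤ A ∧ polarDist A C ≤ s := by
  have hP := hW₀.le_orthogonal (U := W₀ ⊓ W₁) inf_le_left
  have hA := hB.isLagrangian_gate hP hC
  have e₀ := hB.polarDist_gate_add_polarDist hP hC hW₀ inf_le_left
  have e₁ := hB.polarDist_gate_add_polarDist hP hC hW₁ inf_le_right
  refine ⟨gate B (W₀ ⊓ W₁) C, hA, le_gate, ?_⟩
  have htri := hB.polarDist_triangle hW₁ hW₀ hA
  rw [hB.polarDist_comm hW₁ hA] at htri
  rw [hB.polarDist_comm hA hC]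
  lia

end IsSymplectic

end FiniteDimensional

/-! ### Isometries -/

lemma map_orthogonal (g : B.IsometryEquiv B) (W : Submodule F V) :
    (B.orthogonal W).map (g : V →ₗ[F] V) = B.orthogonal (W.map (g : V →ₗ[F] V)) := by
  refine le_antisymm ?_ fun y hy ↦ ?_
  · rintro _ ⟨x, hx, rfl⟩ _ ⟨w, hw, rfl⟩
    exact (g.map_app x w).trans (hx w hw)
  · obtain ⟨x, rfl⟩ := g.toLinearEquiv.surjective y
    exact ⟨x, fun w hw ↦ (g.map_app x w).symm.trans (hy _ (mem_map_of_mem hw)), rfl⟩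

lemma isLagrangian_map (g : B.IsometryEquiv B) (hW : IsLagrangian B W) :
    IsLagrangian B (W.map (g : V →ₗ[F] V)) := by
  rw [IsLagrangian, ← map_orthogonal, hW]

lemma polarDist_map (g : V ≃ₗ[F] V) (A C : Submodule F V) :
    polarDist (A.map (g : V →ₗ[F] V)) (C.map (g : V →ₗ[F] V)) = polarDist A C := by
  rw [polarDist, polarDist, ← map_inf _ g.injective, LinearEquiv.finrank_map_eq,
    LinearEquiv.finrank_map_eq]

lemma exists_linearEquiv_of_isCompl (hAL : IsCompl A L) (hAL' : IsCompl A' L')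
    (f : A ≃ₗ[F] A') (h : L ≃ₗ[F] L') :
    ∃ g : V ≃ₗ[F] V, (∀ a : A, g a = f a) ∧ ∀ l : L, g l = h l :=
  ⟨(A.prodEquivOfIsCompl L hAL).symm ≪≫ₗ f.prodCongr h ≪≫ₗ A'.prodEquivOfIsCompl L' hAL',
    fun a ↦ by simp, fun l ↦ by simp⟩

lemma exists_linearEquiv_map_eq {V₁ V₂ : Type*} [AddCommGroup V₁] [Module F V₁]
    [AddCommGroup V₂] [Module F V₂] [FiniteDimensional F V₁] [FiniteDimensional F V₂]
    {K₁ : Submodule F V₁} {K₂ : Submodule F V₂} (hV : finrank F V₁ = finrank F V₂)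
    (hK : finrank F K₁ = finrank F K₂) :
    ∃ e : V₁ ≃ₗ[F] V₂, K₁.map (e : V₁ →ₗ[F] V₂) = K₂ := by
  let e₀ : V₁ ≃ₗ[F] V₂ := LinearEquiv.ofFinrankEq V₁ V₂ hV
  obtain ⟨e₁, he₁⟩ := exists_linearEquiv_restrict_eq
    ((e₀.submoduleMap K₁).symm ≪≫ₗ LinearEquiv.ofFinrankEq K₁ K₂ hK)
  refine ⟨e₀ ≪≫ₗ e₁, eq_of_le_of_finrank_eq ?_ (by rw [LinearEquiv.finrank_map_eq, hK])⟩
  rintro _ ⟨x, hx, rfl⟩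
  have h := he₁ (e₀.submoduleMap K₁ ⟨x, hx⟩)
  exact (h ▸ coe_mem _ : e₁ (e₀.submoduleMap K₁ ⟨x, hx⟩) ∈ K₂)

section FiniteDimensional

variable [FiniteDimensional F V]

lemma finrank_add_finrank_comap_subtype (hAL : IsCompl A L) (hAE : A ≤ E) :
    finrank F A + finrank F (E.comap L.subtype) = finrank F E := by
  have hE : A ⊔ L ⊓ E = E := by rw [← sup_inf_assoc_of_le _ hAE, hAL.sup_eq_top, top_inf_eq]
  have hdisj : A ⊓ (L ⊓ E) = ⊥ := (hAL.disjoint.mono_right inf_le_left).eq_bot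
  have h := finrank_sup_add_finrank_inf_eq A (L ⊓ E)
  rwa [hE, hdisj, finrank_bot, add_zero, ← map_comap_subtype, finrank_map_subtype_eq, eq_comm] at h

namespace IsSymplectic

lemma exists_linearEquiv_dual (hB : IsSymplectic B d) (hA : IsLagrangian B A)
    (hL : IsLagrangian B L) (hAL : Disjoint A L) :
    ∃ φ : A ≃ₗ[F] Dual F L, ∀ a l, φ a l = B a l := by
  let φ : A →ₗ[F] Dual F L := L.subtype.dualMap ∘ₗ B ∘ₗ A.subtype
  have hφ : Function.Injective φ := by
    refine (injective_iff_map_eq_zero φ).2 fun a ha ↦ Subtype.ext (disjoint_def.1 hAL a a.2 ?_)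
    exact hL.le fun l hl ↦ hB.isAlt.isRefl _ _ (DFunLike.congr_fun ha ⟨l, hl⟩)
  refine ⟨LinearEquiv.ofInjectiveOfFinrankEq φ hφ ?_, fun _ _ ↦ rfl⟩
  rw [Subspace.dual_finrank_eq, hB.finrank_eq_of_isLagrangian hA, hB.finrank_eq_of_isLagrangian hL]

/-- Since `A` and `A'` are the duals of `L` and `L'`, the inverse transpose of `h` extends `h`. -/
lemma exists_isometryEquiv_of_linearEquiv (hB : IsSymplectic B d) (hA : IsLagrangian B A)
    (hL : IsLagrangian B L) (hAL : IsCompl A L) (hA' : IsLagrangian B A')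
    (hL' : IsLagrangian B L') (hAL' : IsCompl A' L') (h : L ≃ₗ[F] L') :
    ∃ g : B.IsometryEquiv B, A.map (g : V →ₗ[F] V) = A' ∧ ∀ l : L, g l = h l := by
  obtain ⟨φ, hφ⟩ := hB.exists_linearEquiv_dual hA hL hAL.disjoint
  obtain ⟨φ', hφ'⟩ := hB.exists_linearEquiv_dual hA' hL' hAL'.disjoint
  let f : A ≃ₗ[F] A' := φ ≪≫ₗ h.symm.dualMap ≪≫ₗ φ'.symm
  have hf (a : A) (l : L) : B (f a) (h l) = B a l := by
    rw [← hφ', ← hφ]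
    simp [f]
  have hf' (a : A) (l : L) : B (h l) (f a) = B l a := by
    rw [← hB.isAlt.neg_eq, hf, hB.isAlt.neg_eq]
  obtain ⟨g, hgA, hgL⟩ := exists_linearEquiv_of_isCompl hAL hAL' f h
  have hdec (x : V) : ∃ (a : A) (l : L), x = a + l := by
    obtain ⟨a, ha, l, hl, rfl⟩ := mem_sup.1 (hAL.sup_eq_top ▸ mem_top : x ∈ A ⊔ L)
    exact ⟨⟨a, ha⟩, ⟨l, hl⟩, rfl⟩
  have hzero {W : Submodule F V} (hW : IsLagrangian B W) (x y : W) : B x y = 0 :=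
    (hB.isLagrangian_iff.1 hW).2 x x.2 y y.2
  have hg (x y : V) : B (g x) (g y) = B x y := by
    obtain ⟨a, l, rfl⟩ := hdec x
    obtain ⟨b, m, rfl⟩ := hdec y
    simp only [map_add, hgA, hgL, LinearMap.add_apply, hf, hf', hzero hA, hzero hA', hzero hL,
      hzero hL']
  refine ⟨⟨g, hg⟩, eq_of_le_of_finrank_eq ?_ ?_, hgL⟩
  · rintro _ ⟨a, ha, rfl⟩
    exact (hgA ⟨a, ha⟩).symm ▸ (f ⟨a, ha⟩).2
  · rw [LinearEquiv.finrank_map_eq, hB.finrank_eq_of_isLagrangian hA,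
      hB.finrank_eq_of_isLagrangian hA']

lemma exists_isometryEquiv_map_eq (hB : IsSymplectic B d) (hA : IsLagrangian B A)
    (hA' : IsLagrangian B A') (hAE : A ≤ E) (hAE' : A' ≤ E')
    (hEE' : finrank F E = finrank F E') :
    ∃ g : B.IsometryEquiv B,
      A.map (g : V →ₗ[F] V) = A' ∧ E.map (g : V →ₗ[F] V) = E' := by
  obtain ⟨L, hL, hAL⟩ := hB.exists_isLagrangian_isCompl hA
  obtain ⟨L', hL', hAL'⟩ := hB.exists_isLagrangian_isCompl hA'
  have hLL' : finrank F L = finrank F L' := by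
    rw [hB.finrank_eq_of_isLagrangian hL, hB.finrank_eq_of_isLagrangian hL']
  obtain ⟨h, hh⟩ : ∃ h : L ≃ₗ[F] L',
      (E.comap L.subtype).map (h : L →ₗ[F] L') = E'.comap L'.subtype := by
    refine exists_linearEquiv_map_eq hLL' ?_
    have e := finrank_add_finrank_comap_subtype hAL hAE
    have e' := finrank_add_finrank_comap_subtype hAL' hAE'
    rw [hB.finrank_eq_of_isLagrangian hA] at e
    rw [hB.finrank_eq_of_isLagrangian hA'] at e'
    lia
  obtain ⟨g, hgA, hgL⟩ := hB.exists_isometryEquiv_of_linearEquiv hA hL hAL hA' hL' hAL' h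
  refine ⟨g, hgA, eq_of_le_of_finrank_eq ?_ (by rw [LinearEquiv.finrank_map_eq, hEE'])⟩
  rintro _ ⟨x, hx, rfl⟩
  obtain ⟨a, ha, l, hl, rfl⟩ := mem_sup.1 (hAL.sup_eq_top ▸ mem_top : x ∈ A ⊔ L)
  have hga : g a ∈ A' := hgA ▸ mem_map_of_mem ha
  have hgl : g l ∈ E' := by
    have hlE : l ∈ E := (Submodule.add_mem_iff_right _ (hAE ha)).1 hx
    have : h ⟨l, hl⟩ ∈ E'.comap L'.subtype := hh ▸ ⟨⟨l, hl⟩, hlE, rfl⟩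
    exact (hgL ⟨l, hl⟩).symm ▸ this
  simpa using add_mem (hAE' hga) hgl

end IsSymplectic

end FiniteDimensional

/-! ### Double counting -/

lemma ncard_mul_le_ncard_mul {α β : Type*} [Finite α] [Finite β] (r : α → β → Prop)
    {S : Set α} {T : Set β} (hm : ∀ a ∈ S, m ≤ {b ∈ T | r a b}.ncard)
    (hn : ∀ b ∈ T, {a ∈ S | r a b}.ncard ≤ n) : S.ncard * m ≤ T.ncard * n := by
  classical
  have := Fintype.ofFinite α
  have := Fintype.ofFinite β
  simp only [Set.ncard_eq_toFinset_card'] at hm hn ⊢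
  refine Finset.card_mul_le_card_mul r (fun a ha ↦ ?_) fun b hb ↦ ?_
  · convert hm a (by simpa using ha)
    ext
    simp [Finset.bipartiteAbove]
  · convert hn b (by simpa using hb)
    ext
    simp [Finset.bipartiteBelow]

lemma exists_ncard_le_ncard_mul {α β : Type*} [Finite α] [Finite β] (r : α → β → Prop)
    {S : Set α} {T : Set β} (hS : S.Nonempty) (h : ∀ a ∈ S, ∃ b ∈ T, r a b) :
    ∃ b ∈ T, S.ncard ≤ T.ncard * {a ∈ S | r a b}.ncard := by
  obtain ⟨a, ha⟩ := hS
  obtain ⟨b₀, hb₀, -⟩ := h a ha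
  obtain ⟨b, hb, hmax⟩ :=
    T.toFinite.exists_maximalFor (fun b ↦ {a ∈ S | r a b}.ncard) T ⟨b₀, hb₀⟩
  refine ⟨b, hb, ?_⟩
  have hone : ∀ a ∈ S, 1 ≤ {b ∈ T | r a b}.ncard := fun a ha ↦
    (Set.ncard_pos).2 (h a ha)
  have hle : ∀ b' ∈ T, {a ∈ S | r a b'}.ncard ≤ {a ∈ S | r a b}.ncard := fun b' hb' ↦
    (le_total _ _).elim id (hmax hb')
  simpa only [mul_one] using ncard_mul_le_ncard_mul r hone hle

lemma ncard_coe [FiniteDimensional F V] (W : Submodule F V) :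
    (W : Set V).ncard = Nat.card F ^ finrank F W :=
  (Nat.card_coe_set_eq _).symm.trans (natCard_eq_pow_finrank (V := W))

section Finite

variable [Finite V]

lemma ncard_coe_sdiff_coe (h : A ≤ W) :
    ((W : Set V) \ A).ncard = Nat.card F ^ finrank F W - Nat.card F ^ finrank F A := by
  rw [Set.ncard_sdiff h, ncard_coe, ncard_coe]

variable [Finite F] in
lemma ncard_mul_le_of_forall_notMem {α : Type*} [Finite α] {𝒞 : Set α} {Φ : α → Submodule F V}
    (hKΦ : ∀ c ∈ 𝒞, K ≤ Φ c) (hKX : K ≤ X) (hm : ∀ c ∈ 𝒞, m ≤ finrank F ↥(Φ c ⊓ X))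
    (hn : ∀ x ∈ X, x ∉ K → {c ∈ 𝒞 | x ∈ Φ c}.ncard ≤ n) :
    𝒞.ncard * (Nat.card F ^ m - Nat.card F ^ finrank F K) ≤
      (Nat.card F ^ finrank F X - Nat.card F ^ finrank F K) * n := by
  rw [← ncard_coe_sdiff_coe hKX]
  refine ncard_mul_le_ncard_mul (fun c x ↦ x ∈ Φ c) (fun c hc ↦ ?_) fun x hx ↦ hn x hx.1 hx.2
  calc Nat.card F ^ m - Nat.card F ^ finrank F K
      ≤ Nat.card F ^ finrank F ↥(Φ c ⊓ X) - Nat.card F ^ finrank F K :=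
        Nat.sub_le_sub_right (Nat.pow_le_pow_right Nat.card_pos (hm c hc)) _
    _ = {x ∈ (X : Set V) \ K | x ∈ Φ c}.ncard := by
      rw [← ncard_coe_sdiff_coe (le_inf (hKΦ c hc) hKX)]
      congr 1
      ext x
      simp only [coe_inf, Set.mem_sdiff, Set.mem_inter_iff, SetLike.mem_coe, Set.mem_ofPred_eq]
      tauto

end Finite

/-! ### Spheres and balls of Lagrangians -/

/-- The generators at distance `k` from `A` in the dual polar graph. -/
def sphere (B : BilinForm F V) (A : Submodule F V) (k : ℕ) : Set (Submodule F V) :=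
  {C | IsLagrangian B C ∧ polarDist A C = k}

/-- The generators at distance `k` from `A` whose span with `A` contains `E`. -/
def sphereThrough (B : BilinForm F V) (A E : Submodule F V) (k : ℕ) : Set (Submodule F V) :=
  {C ∈ sphere B A k | E ≤ A ⊔ C}

/-- The generators at distance less than `k` from `A` in the dual polar graph. -/
def ball (B : BilinForm F V) (A : Submodule F V) (k : ℕ) : Set (Submodule F V) :=
  {C | IsLagrangian B C ∧ polarDist A C < k}

lemma sphereThrough_self : sphereThrough B A A k = sphere B A k :=
  Set.sep_eq_self_iff_mem_true.2 fun _ _ ↦ le_sup_left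

lemma ball_succ : ball B A (k + 1) = ball B A k ∪ sphere B A k := by
  ext C
  simp only [ball, sphere, Set.mem_union, Set.mem_ofPred_eq, Nat.lt_succ_iff_lt_or_eq, and_or_left]

lemma sphere_subset_ball : sphere B A k ⊆ ball B A (k + 1) :=
  fun _ hC ↦ ⟨hC.1, Nat.lt_succ_of_le hC.2.le⟩

lemma mem_ball_self (hA : IsLagrangian B A) (hk : 0 < k) : A ∈ ball B A k :=
  ⟨hA, by rwa [polarDist, inf_idem, Nat.sub_self]⟩

namespace IsSymplectic

variable [FiniteDimensional F V] in
lemma sphere_subset_union (hB : IsSymplectic B d) (hA : IsLagrangian B A)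
    (hA' : IsLagrangian B A') (hAA' : polarDist A A' = 1) (k : ℕ) :
    sphere B A k ⊆ sphereThrough B A (A ⊔ A') k ∪ sphereThrough B A' (A ⊔ A') (k + 1) := by
  rintro C ⟨hC, rfl⟩
  by_cases h : A' ≤ A ⊔ C
  · exact .inl ⟨⟨hC, rfl⟩, sup_le le_sup_left h⟩
  · have hlt : (A ⊔ C) ⊓ (A ⊔ A') < A ⊔ A' :=
      inf_lt_right.2 fun h' ↦ h (le_sup_right.trans h')
    have hdim := finrank_lt_finrank_of_lt hlt
    rw [hB.finrank_sup_eq_add_polarDist hA hA', hAA', Nat.lt_succ_iff,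
      ← hB.finrank_eq_of_isLagrangian hA] at hdim
    have hinf := (eq_of_le_of_finrank_le (le_inf le_sup_left le_sup_left) hdim).ge
    have hle := hB.le_inf_sup_inf_of_inf_le hA hC hA' hinf
    have hdist := hB.polarDist_add_polarDist_of_le_sup hA hC hA' hle
    refine .inr ⟨⟨hC, ?_⟩, ?_⟩
    · rw [hB.polarDist_comm hA' hC, ← hdist, hAA', hB.polarDist_comm hC hA]
    · exact sup_le (hle.trans (sup_comm C A' ▸ sup_le_sup inf_le_right inf_le_right)) le_sup_left

variable [Finite V]

lemma ncard_sphereThrough_le (hB : IsSymplectic B d) (hA : IsLagrangian B A)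
    (hA' : IsLagrangian B A') (hAE : A ≤ E) (hAE' : A' ≤ E')
    (hEE' : finrank F E = finrank F E') (k : ℕ) :
    (sphereThrough B A E k).ncard ≤ (sphereThrough B A' E' k).ncard := by
  obtain ⟨g, rfl, rfl⟩ := hB.exists_isometryEquiv_map_eq hA hA' hAE hAE' hEE'
  refine Set.ncard_le_ncard_of_injOn (fun C ↦ C.map (g : V →ₗ[F] V)) ?_
    (map_injective_of_injective g.toLinearEquiv.injective).injOn
  rintro C ⟨⟨hC, hk⟩, hE⟩
  refine ⟨⟨isLagrangian_map g hC, (polarDist_map _ A C).trans hk⟩, ?_⟩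
  rw [← Submodule.map_sup]
  exact map_mono hE

lemma ncard_sphereThrough_eq (hB : IsSymplectic B d) (hA : IsLagrangian B A)
    (hA' : IsLagrangian B A') (hAE : A ≤ E) (hAE' : A' ≤ E')
    (hEE' : finrank F E = finrank F E') (k : ℕ) :
    (sphereThrough B A E k).ncard = (sphereThrough B A' E' k).ncard :=
  (hB.ncard_sphereThrough_le hA hA' hAE hAE' hEE' k).antisymm
    (hB.ncard_sphereThrough_le hA' hA hAE' hAE hEE'.symm k)

/-- Double counting the pairs `C`, `y` with `y ∈ A ⊔ C` outside `E`, all `y` being equivalent. -/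
lemma ncard_sphereThrough_sup_mul_sub_le (hB : IsSymplectic B d) (hA : IsLagrangian B A)
    (hAE : A ≤ E) {x : V} (hx : x ∉ E) (k : ℕ) :
    (sphereThrough B A (E ⊔ F ∙ x) k).ncard * (Nat.card F ^ (2 * d) - Nat.card F ^ finrank F E) ≤
      (sphereThrough B A E k).ncard * (Nat.card F ^ (d + k) - Nat.card F ^ finrank F E) := by
  have hcompl : Nat.card F ^ (2 * d) - Nat.card F ^ finrank F E = ((⊤ : Set V) \ E).ncard := by
    rw [← hB.finrank_eq, ← finrank_top F V, ← ncard_coe_sdiff_coe le_top, top_coe]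
    rfl
  rw [hcompl, mul_comm]
  refine ncard_mul_le_ncard_mul (fun y C ↦ y ∈ A ⊔ C) (fun y hy ↦ ?_) fun C hC ↦ ?_
  · calc (sphereThrough B A (E ⊔ F ∙ x) k).ncard = (sphereThrough B A (E ⊔ F ∙ y) k).ncard := by
          refine hB.ncard_sphereThrough_eq hA hA (hAE.trans le_sup_left)
            (hAE.trans le_sup_left) ?_ k
          rw [finrank_sup_span_singleton hx, finrank_sup_span_singleton hy.2]
      _ ≤ {C ∈ sphereThrough B A E k | y ∈ A ⊔ C}.ncard := by
          refine Set.ncard_le_ncard fun C hC ↦ ⟨⟨hC.1, le_sup_left.trans hC.2⟩, ?_⟩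
          exact hC.2 (mem_sup_right (mem_span_singleton_self y))
  · obtain ⟨⟨hC, rfl⟩, hE⟩ := hC
    rw [← hB.finrank_sup_eq_add_polarDist hA hC, ← ncard_coe_sdiff_coe hE]
    exact Set.ncard_le_ncard fun y hy ↦ ⟨hy.2, hy.1.2⟩

variable [Finite F]

lemma ncard_sphereThrough_sup_mul_le (hB : IsSymplectic B d) (hA : IsLagrangian B A)
    (hAE : A ≤ E) {x : V} (hx : x ∉ E) (hk : k ≤ d) :
    (sphereThrough B A (E ⊔ F ∙ x) k).ncard * Nat.card F ^ (d - k) ≤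
      (sphereThrough B A E k).ncard := by
  have h := hB.ncard_sphereThrough_sup_mul_sub_le hA hAE hx k
  have hq : 0 < Nat.card F := Nat.card_pos
  have hE : finrank F E < 2 * d := by
    rw [← hB.finrank_eq]
    exact finrank_lt (ne_of_mem_of_not_mem' mem_top hx).symm
  have hpos : 0 < Nat.card F ^ (2 * d) - Nat.card F ^ finrank F E :=
    Nat.sub_pos_of_lt (Nat.pow_lt_pow_right Finite.one_lt_card hE)
  have hratio : (Nat.card F ^ (d + k) - Nat.card F ^ finrank F E) * Nat.card F ^ (d - k) ≤
      Nat.card F ^ (2 * d) - Nat.card F ^ finrank F E := by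
    rw [Nat.sub_mul, ← pow_add, show d + k + (d - k) = 2 * d by lia]
    exact Nat.sub_le_sub_left (Nat.le_mul_of_pos_right _ (pow_pos hq _)) _
  refine Nat.le_of_mul_le_mul_right ?_ hpos
  calc _ = _ := mul_right_comm _ _ _
    _ ≤ _ := Nat.mul_le_mul_right _ h
    _ ≤ _ := (mul_assoc _ _ _).trans_le (Nat.mul_le_mul_left _ hratio)

lemma ncard_sphere_mul_le (hB : IsSymplectic B d) (hA : IsLagrangian B A) (hk : k + 1 ≤ d) :
    (sphere B A k).ncard * Nat.card F ^ d ≤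
      (sphere B A (k + 1)).ncard * Nat.card F ^ (k + 2) := by
  obtain ⟨v, hv⟩ := hB.exists_notMem hA (by lia)
  obtain ⟨A', hA', hdist, hsup⟩ := hB.exists_sup_eq_sup_span_singleton hA hv
  set q := Nat.card F
  have hq : 2 ≤ q := Finite.one_lt_card
  have hk₀ : (sphereThrough B A (A ⊔ A') k).ncard * q ^ (d - k) ≤ (sphere B A k).ncard := by
    simpa only [hsup, sphereThrough_self] using
      hB.ncard_sphereThrough_sup_mul_le hA le_rfl hv (k := k) (by lia)
  have hk₁ : (sphereThrough B A' (A ⊔ A') (k + 1)).ncard * q ^ (d - (k + 1)) ≤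
      (sphere B A (k + 1)).ncard := by
    rw [hB.ncard_sphereThrough_eq hA' hA le_sup_right le_sup_left rfl]
    simpa only [hsup, sphereThrough_self] using
      hB.ncard_sphereThrough_sup_mul_le hA le_rfl hv hk
  have hunion := (Set.ncard_le_ncard (hB.sphere_subset_union hA hA' hdist k)).trans
    (Set.ncard_union_le _ _)
  obtain ⟨j, rfl⟩ := Nat.exists_eq_add_of_le hk
  rw [show k + 1 + j - k = j + 1 by lia] at hk₀
  rw [Nat.add_sub_cancel_left] at hk₁
  have hpow : q ^ j + 1 ≤ q ^ (j + 1) := by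
    rw [pow_succ]
    nlinarith [Nat.one_le_pow j q (by lia)]
  have hstep : (sphere B A k).ncard * q ^ j ≤ (sphere B A (k + 1)).ncard * q := by
    rw [pow_succ] at hk₀ hpow
    nlinarith [Nat.mul_le_mul_right (q ^ j * q) hunion, Nat.mul_le_mul_right q hk₁,
      Nat.mul_le_mul_left (sphere B A k).ncard hpow]
  calc (sphere B A k).ncard * q ^ (k + 1 + j) = (sphere B A k).ncard * q ^ j * q ^ (k + 1) := by
        rw [pow_add]; ring
    _ ≤ (sphere B A (k + 1)).ncard * q * q ^ (k + 1) := Nat.mul_le_mul_right _ hstep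
    _ = (sphere B A (k + 1)).ncard * q ^ (k + 2) := by ring

lemma ncard_ball_mul_le (hB : IsSymplectic B d) (hA : IsLagrangian B A) :
    ∀ {k : ℕ}, k + 1 ≤ d → (ball B A k).ncard * Nat.card F ^ d ≤
      (sphere B A k).ncard * Nat.card F ^ (k + 2)
  | 0, _ => by simp [ball]
  | k + 1, hk => by
    set q := Nat.card F
    have hq : 2 ≤ q := Finite.one_lt_card
    have hball : (ball B A k).ncard * q ^ d ≤ (sphere B A k).ncard * q ^ (k + 2) :=
      hB.ncard_ball_mul_le hA (by lia)
    have hpow : q ^ (k + 2) ≤ q ^ d := Nat.pow_le_pow_right (by lia) (by lia)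
    calc (ball B A (k + 1)).ncard * q ^ d
        ≤ (ball B A k).ncard * q ^ d + (sphere B A k).ncard * q ^ d := by
          rw [ball_succ, ← add_mul]
          exact Nat.mul_le_mul_right _ (Set.ncard_union_le _ _)
      _ ≤ (sphere B A k).ncard * q ^ d * q := by
          linarith [Nat.mul_le_mul_left (sphere B A k).ncard hpow,
            Nat.mul_le_mul_left ((sphere B A k).ncard * q ^ d) hq]
      _ ≤ (sphere B A (k + 1)).ncard * q ^ (k + 2) * q :=
          Nat.mul_le_mul_right _ (hB.ncard_sphere_mul_le hA (by lia))
      _ = (sphere B A (k + 1)).ncard * q ^ (k + 1 + 2) := by ring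

end IsSymplectic

/-! ### Centers of EKR sets -/

lemma prod_range_pow_succ_add_one_mul_le {q : ℕ} (hq : 2 ≤ q) (m : ℕ) :
    (∏ i ∈ Finset.range m, (q ^ (i + 1) + 1)) * (q ^ m + 2) ≤
      3 * (q ^ m * q ^ (m + 1).choose 2) := by
  induction m with
  | zero => simp
  | succ m ih =>
    have hchoose : (m + 1 + 1).choose 2 = (m + 1).choose 2 + (m + 1) := by
      rw [Nat.choose_succ_succ', Nat.choose_one_right, add_comm]
    rw [Finset.prod_range_succ, hchoose, pow_add q _ (m + 1)]
    have hx : 1 ≤ q ^ m := Nat.one_le_pow _ _ (by lia)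
    have hy : 2 * q ^ m ≤ q ^ (m + 1) := by
      rw [pow_succ']
      exact Nat.mul_le_mul_right _ hq
    generalize q ^ m = x at *
    generalize q ^ (m + 1) = y at *
    generalize q ^ (m + 1).choose 2 = z at *
    generalize ∏ i ∈ Finset.range m, (q ^ (i + 1) + 1) = p at *
    have hxy : x * ((y + 1) * (y + 2)) ≤ (x + 2) * (y * y) := by nlinarith
    refine Nat.le_of_mul_le_mul_left ?_ hx
    calc x * (p * (y + 1) * (y + 2)) = p * (x * ((y + 1) * (y + 2))) := by ring
      _ ≤ p * ((x + 2) * (y * y)) := Nat.mul_le_mul_left _ hxy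
      _ = p * (x + 2) * (y * y) := by ring
      _ ≤ 3 * (x * z) * (y * y) := Nat.mul_le_mul_right _ ih
      _ = x * (3 * (y * (z * y))) := by ring

lemma prod_range_pow_succ_add_one_le {q : ℕ} (hq : 2 ≤ q) (m : ℕ) :
    ∏ i ∈ Finset.range m, (q ^ (i + 1) + 1) ≤ q ^ ((m + 1).choose 2 + 2) := by
  have h := prod_range_pow_succ_add_one_mul_le hq m
  have hpos : 0 < q ^ m := Nat.pow_pos (by lia)
  refine Nat.le_of_mul_le_mul_right ?_ hpos
  calc _ ≤ (∏ i ∈ Finset.range m, (q ^ (i + 1) + 1)) * (q ^ m + 2) :=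
        Nat.mul_le_mul_left _ (Nat.le_add_right _ _)
    _ ≤ 3 * (q ^ m * q ^ (m + 1).choose 2) := h
    _ ≤ q ^ 2 * (q ^ m * q ^ (m + 1).choose 2) := Nat.mul_le_mul_right _ (by nlinarith)
    _ = q ^ ((m + 1).choose 2 + 2) * q ^ m := by ring

/-- An EKR set: generators pairwise at distance at most `t` in the dual polar graph, that is,
meeting in codimension at most `t`. -/
structure IsEKR (B : BilinForm F V) (t : ℕ) (Y : Set (Submodule F V)) : Prop where
  isLagrangian : ∀ W ∈ Y, IsLagrangian B W
  polarDist_le : ∀ W₁ ∈ Y, ∀ W₂ ∈ Y, polarDist W₁ W₂ ≤ t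

namespace IsSymplectic

variable [FiniteDimensional F V] in
lemma isEKR_iff (hB : IsSymplectic B d) :
    IsEKR B t Y ↔ (∀ W ∈ Y, finrank F W = d ∧ ∀ x ∈ W, ∀ y ∈ W, B x y = 0) ∧
      ∀ W₁ ∈ Y, ∀ W₂ ∈ Y, d - t ≤ finrank F ↥(W₁ ⊓ W₂) := by
  have hdist : ∀ W₁ W₂ : Submodule F V, IsLagrangian B W₁ →
      (polarDist W₁ W₂ ≤ t ↔ d - t ≤ finrank F ↥(W₁ ⊓ W₂)) := fun W₁ W₂ hW₁ ↦ by
    rw [polarDist, hB.finrank_eq_of_isLagrangian hW₁, tsub_le_iff_left, tsub_le_iff_left, add_comm]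
  constructor
  · rintro ⟨h₁, h₂⟩
    exact ⟨fun W hW ↦ hB.isLagrangian_iff.1 (h₁ W hW),
      fun W₁ hW₁ W₂ hW₂ ↦ (hdist W₁ W₂ (h₁ W₁ hW₁)).1 (h₂ W₁ hW₁ W₂ hW₂)⟩
  · rintro ⟨h₁, h₂⟩
    have hL : ∀ W ∈ Y, IsLagrangian B W := fun W hW ↦ hB.isLagrangian_iff.2 (h₁ W hW)
    exact ⟨hL, fun W₁ hW₁ W₂ hW₂ ↦ (hdist W₁ W₂ (hL W₁ hW₁)).2 (h₂ W₁ hW₁ W₂ hW₂)⟩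

variable [Finite V] [Finite F]

lemma ncard_isLagrangian_ge_le_prod (hB : IsSymplectic B d) :
    ∀ {m : ℕ} {P : Submodule F V}, P ≤ B.orthogonal P → finrank F P + m = d →
      {W | IsLagrangian B W ∧ P ≤ W}.ncard ≤ ∏ i ∈ Finset.range m, (Nat.card F ^ (i + 1) + 1)
  | 0, P, _, hdim => by
    refine (Set.ncard_le_one_iff_subset_singleton).2 ⟨P, fun W ⟨hW, hPW⟩ ↦ ?_⟩
    exact (eq_of_le_of_finrank_eq hPW (hdim.trans (hB.finrank_eq_of_isLagrangian hW).symm)).symm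
  | m + 1, P, hP, hdim => by
    rw [Finset.prod_range_succ]
    set N := ∏ i ∈ Finset.range m, (Nat.card F ^ (i + 1) + 1)
    have hcount := ncard_mul_le_of_forall_notMem (𝒞 := {W | IsLagrangian B W ∧ P ≤ W}) (Φ := id)
      (K := P) (X := B.orthogonal P) (m := d) (n := N) (fun W hW ↦ hW.2) hP ?_ ?_
    · have hrank : finrank F (B.orthogonal P) = finrank F P + (m + 1) + (m + 1) := by
        have := hB.finrank_add_finrank_orthogonal P
        lia
      have hfactor : Nat.card F ^ finrank F (B.orthogonal P) - Nat.card F ^ finrank F P =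
          (Nat.card F ^ (m + 1) + 1) * (Nat.card F ^ d - Nat.card F ^ finrank F P) := by
        rw [hrank, ← hdim, pow_add, pow_add, Nat.mul_sub]
        generalize Nat.card F ^ finrank F P = a
        generalize Nat.card F ^ (m + 1) = b
        rw [show (b + 1) * (a * b) = a * b * b + a * b by ring,
          show (b + 1) * a = a + a * b by ring, Nat.add_sub_add_right]
      have hpos : 0 < Nat.card F ^ d - Nat.card F ^ finrank F P :=
        Nat.sub_pos_of_lt (Nat.pow_lt_pow_right Finite.one_lt_card (by lia))
      rw [hfactor] at hcount
      refine Nat.le_of_mul_le_mul_right (hcount.trans_eq ?_) hpos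
      ring
    · rintro W ⟨hW, hPW⟩
      have hle : W ≤ B.orthogonal P := hW.ge.trans (BilinForm.orthogonal_le hPW)
      rw [id, inf_eq_left.2 hle, hB.finrank_eq_of_isLagrangian hW]
    · intro x hx hxP
      refine le_trans (Set.ncard_le_ncard ?_) <| hB.ncard_isLagrangian_ge_le_prod
        (sup_span_singleton_le_orthogonal hB.isAlt hP hx)
        (by rw [finrank_sup_span_singleton hxP]; lia)
      exact fun W ⟨⟨hW, hPW⟩, hxW⟩ ↦ ⟨hW, sup_le hPW ((span_singleton_le_iff_mem _ _).2 hxW)⟩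

lemma ncard_isLagrangian_ge_le (hB : IsSymplectic B d) (hP : P ≤ B.orthogonal P)
    (hdim : finrank F P + m = d) :
    {W | IsLagrangian B W ∧ P ≤ W}.ncard ≤ Nat.card F ^ ((m + 1).choose 2 + 2) :=
  (hB.ncard_isLagrangian_ge_le_prod hP hdim).trans
    (prod_range_pow_succ_add_one_le Finite.one_lt_card m)

end IsSymplectic

variable [Finite V] [Finite F] in
lemma IsEKR.exists_ncard_le (hB : IsSymplectic B d) (hY : IsEKR B (2 * s + 1) Y)
    (hne : Y.Nonempty) :
    ∃ A, IsLagrangian B A ∧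
      Y.ncard ≤ Nat.card F ^ ((s + 1) * (2 * s + 1) + 2) * (Y ∩ ball B A (s + 1)).ncard := by
  obtain ⟨⟨W₁, W₀⟩, ⟨h₁, h₀⟩, hmax⟩ := (Y ×ˢ Y).toFinite.exists_maximalFor
    (fun W ↦ polarDist W.1 W.2) (Y ×ˢ Y) (hne.prod hne)
  have hW₁ := hY.isLagrangian W₁ h₁
  have hW₀ := hY.isLagrangian W₀ h₀
  have hfar {C C' : Submodule F V} (hC : C ∈ Y) (hC' : C' ∈ Y) :
      polarDist C C' ≤ polarDist W₁ W₀ :=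
    (le_total _ _).elim id (hmax (j := (C, C')) ⟨hC, hC'⟩)
  have hs := hY.polarDist_le W₁ h₁ W₀ h₀
  obtain ⟨A, ⟨hA, -⟩, hle⟩ := exists_ncard_le_ncard_mul (fun C A ↦ C ∈ ball B A (s + 1))
    (S := Y) (T := {W | IsLagrangian B W ∧ W₀ ⊓ W₁ ≤ W}) hne fun C hC ↦ by
      have hCL := hY.isLagrangian C hC
      obtain ⟨A, hA, hPA, hAC⟩ :=
        hB.exists_near_generator hW₀ hW₁ hCL (hfar hC h₁) (hfar hC h₀) hs
      exact ⟨A, ⟨hA, hPA⟩, hCL, Nat.lt_succ_of_le hAC⟩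
  refine ⟨A, hA, hle.trans (Nat.mul_le_mul_right _ ?_)⟩
  have hP := hW₀.le_orthogonal (U := W₀ ⊓ W₁) inf_le_left
  have hdim : finrank F ↥(W₀ ⊓ W₁) + polarDist W₁ W₀ = d := by
    rw [inf_comm, finrank_inf_add_polarDist, hB.finrank_eq_of_isLagrangian hW₁]
  refine (hB.ncard_isLagrangian_ge_le hP hdim).trans
    (Nat.pow_le_pow_right Nat.card_pos (Nat.add_le_add_right ?_ 2))
  calc (polarDist W₁ W₀ + 1).choose 2 ≤ (2 * s + 2).choose 2 :=
        Nat.choose_le_choose 2 (by lia)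
    _ = (s + 1) * (2 * s + 1) := by
        rw [Nat.choose_two_right, show 2 * s + 2 = 2 * (s + 1) by ring, mul_assoc,
          Nat.mul_div_cancel_left _ two_pos]
        rfl

/-! ### Layers of EKR sets -/

lemma ncard_mul_le_of_forall_inf_ne [Finite F] [Finite V] (hAE : A ≤ E)
    (hr : finrank F E = finrank F A + r) (hne : ∀ C ∈ 𝒞, (A ⊔ C) ⊓ E ≠ A)
    (hn : ∀ x ∈ E, x ∉ A → {C ∈ 𝒞 | x ∈ A ⊔ C}.ncard * l ≤ n) :
    𝒞.ncard * l ≤ Nat.card F ^ r * n := by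
  rcases l.eq_zero_or_pos with rfl | hl
  · simp
  have hcount := ncard_mul_le_of_forall_notMem (𝒞 := 𝒞) (Φ := fun C ↦ A ⊔ C) (K := A) (X := E)
    (m := finrank F A + 1) (n := n / l) (fun _ _ ↦ le_sup_left) hAE
    (fun C hC ↦ finrank_lt_finrank_of_lt ((le_inf le_sup_left hAE).lt_of_ne (hne C hC).symm))
    fun x hx hxA ↦ (Nat.le_div_iff_mul_le hl).2 (hn x hx hxA)
  have hpos : 0 < Nat.card F ^ finrank F A := pow_pos Nat.card_pos _
  have hpow : Nat.card F ^ finrank F A ≤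
      Nat.card F ^ (finrank F A + 1) - Nat.card F ^ finrank F A := by
    have : 2 ≤ Nat.card F := Finite.one_lt_card
    rw [pow_succ]
    exact Nat.le_sub_of_add_le (by nlinarith)
  have hle : 𝒞.ncard ≤ Nat.card F ^ r * (n / l) := by
    refine Nat.le_of_mul_le_mul_right ?_ hpos
    calc _ ≤ _ := Nat.mul_le_mul_left _ hpow
      _ ≤ _ := hcount
      _ ≤ Nat.card F ^ finrank F E * (n / l) := Nat.mul_le_mul_right _ (Nat.sub_le _ _)
      _ = Nat.card F ^ r * (n / l) * Nat.card F ^ finrank F A := by rw [hr, pow_add]; ring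
  calc 𝒞.ncard * l ≤ Nat.card F ^ r * (n / l) * l := Nat.mul_le_mul_right _ hle
    _ = Nat.card F ^ r * (n / l * l) := mul_assoc _ _ _
    _ ≤ Nat.card F ^ r * n := Nat.mul_le_mul_left _ (Nat.div_mul_le_self n l)

lemma IsSymplectic.sup_inf_sup_ne [FiniteDimensional F V] (hB : IsSymplectic B d)
    (hA : IsLagrangian B A) (hC : IsLagrangian B C) (hC' : IsLagrangian B C')
    (h : polarDist C C' < polarDist A C + polarDist A C') : (A ⊔ C) ⊓ (A ⊔ C') ≠ A := by
  intro hinf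
  have hle := hB.le_inf_sup_inf_of_inf_le hA hC hC' hinf.le
  rw [← hB.polarDist_add_polarDist_of_le_sup hA hC hC' hle, hB.polarDist_comm hA hC] at h
  exact h.ne rfl

section Finite

variable [Finite F] [Finite V]

lemma IsEKR.ncard_inter_sphere_mul_le (hB : IsSymplectic B d) (hY : IsEKR B t Y)
    (hA : IsLagrangian B A) (hC : C ∈ Y) (hk : k ≤ d) (ht : t < k + polarDist A C) :
    (Y ∩ sphere B A k).ncard * Nat.card F ^ (d - k) ≤
      Nat.card F ^ polarDist A C * (sphere B A k).ncard := by
  have hCL := hY.isLagrangian C hC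
  refine ncard_mul_le_of_forall_inf_ne (A := A) (E := A ⊔ C) le_sup_left ?_ ?_ ?_
  · rw [hB.finrank_sup_eq_add_polarDist hA hCL, hB.finrank_eq_of_isLagrangian hA]
  · rintro C' ⟨hC', hC'L, rfl⟩
    exact hB.sup_inf_sup_ne hA hC'L hCL ((hY.polarDist_le C' hC' C hC).trans_lt ht)
  · intro x _ hx
    refine le_trans (Nat.mul_le_mul_right _ (Set.ncard_le_ncard ?_))
      (hB.ncard_sphereThrough_sup_mul_le hA le_rfl hx hk |>.trans_eq (by rw [sphereThrough_self]))
    exact fun C' ⟨⟨_, hC'⟩, hxC'⟩ ↦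
      ⟨hC', sup_le le_sup_left ((span_singleton_le_iff_mem _ _).2 hxC')⟩

lemma IsEKR.ncard_inter_ball_mul_le (hB : IsSymplectic B d) (hY : IsEKR B (2 * s + 1) Y)
    (hA : IsLagrangian B A) (hC : C ∈ Y) (hs : s + 1 ≤ d) (hlo : s + 1 < polarDist A C)
    (hhi : polarDist A C ≤ 3 * s + 1) :
    (Y ∩ ball B A (s + 1)).ncard * Nat.card F ^ d ≤
      (sphere B A s).ncard * Nat.card F ^ (4 * s + 2) := by
  set q := Nat.card F
  have hq : 2 ≤ q := Finite.one_lt_card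
  have hsphere : (Y ∩ sphere B A s).ncard * q ^ d ≤ (sphere B A s).ncard * q ^ (4 * s + 1) := calc
    _ = (Y ∩ sphere B A s).ncard * q ^ (d - s) * q ^ s := by
      rw [mul_assoc, ← pow_add, Nat.sub_add_cancel (by lia)]
    _ ≤ q ^ polarDist A C * (sphere B A s).ncard * q ^ s :=
      Nat.mul_le_mul_right _ (hY.ncard_inter_sphere_mul_le hB hA hC (by lia) (by lia))
    _ = (sphere B A s).ncard * q ^ (polarDist A C + s) := by rw [pow_add]; ring
    _ ≤ (sphere B A s).ncard * q ^ (4 * s + 1) :=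
      Nat.mul_le_mul_left _ (Nat.pow_le_pow_right (by lia) (by lia))
  have hball : (ball B A s).ncard * q ^ d ≤ (sphere B A s).ncard * q ^ (4 * s + 1) :=
    (hB.ncard_ball_mul_le hA hs).trans
      (Nat.mul_le_mul_left _ (Nat.pow_le_pow_right (by lia) (by lia)))
  calc (Y ∩ ball B A (s + 1)).ncard * q ^ d
      ≤ ((ball B A s).ncard + (Y ∩ sphere B A s).ncard) * q ^ d := by
        rw [ball_succ, Set.inter_union_distrib_left]
        refine Nat.mul_le_mul_right _ ((Set.ncard_union_le _ _).trans ?_)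
        exact Nat.add_le_add_right (Set.ncard_le_ncard Set.inter_subset_right) _
    _ ≤ (sphere B A s).ncard * q ^ (4 * s + 1) * 2 := by linarith
    _ ≤ (sphere B A s).ncard * q ^ (4 * s + 1) * q := Nat.mul_le_mul_left _ hq
    _ = (sphere B A s).ncard * q ^ (4 * s + 2) := by ring

lemma IsEKR.subset_ball (hB : IsSymplectic B d) (hd : (s + 1) * (2 * s + 5) < d)
    (hY : IsEKR B (2 * s + 1) Y) (hne : Y.Nonempty) (hA : IsLagrangian B A)
    (hcenter : Y.ncard ≤
      Nat.card F ^ ((s + 1) * (2 * s + 1) + 2) * (Y ∩ ball B A (s + 1)).ncard)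
    (hsphere : (sphere B A s).ncard ≤ Y.ncard) : Y ⊆ ball B A (s + 2) := by
  intro C hC
  refine ⟨hY.isLagrangian C hC, not_le.1 fun hlo ↦ hd.not_ge ?_⟩
  have hYpos : 0 < Y.ncard := (Set.ncard_pos).2 hne
  obtain ⟨C₀, hC₀, hC₀L, hAC₀⟩ : (Y ∩ ball B A (s + 1)).Nonempty :=
    (Set.ncard_pos).1 (Nat.pos_of_mul_pos_left (hYpos.trans_le hcenter))
  have hhi : polarDist A C ≤ 3 * s + 1 := by
    have := hB.polarDist_triangle hA (hY.isLagrangian C hC) hC₀L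
    have := hY.polarDist_le C₀ hC₀ C hC
    lia
  have hball := hY.ncard_inter_ball_mul_le hB hA hC (by nlinarith) hlo hhi
  refine (Nat.pow_le_pow_iff_right (Finite.one_lt_card (α := F))).1 ?_
  set q := Nat.card F
  refine Nat.le_of_mul_le_mul_left ?_ hYpos
  calc Y.ncard * q ^ d
      ≤ q ^ ((s + 1) * (2 * s + 1) + 2) * (Y ∩ ball B A (s + 1)).ncard * q ^ d :=
        Nat.mul_le_mul_right _ hcenter
    _ ≤ q ^ ((s + 1) * (2 * s + 1) + 2) * ((sphere B A s).ncard * q ^ (4 * s + 2)) := by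
        rw [mul_assoc]
        exact Nat.mul_le_mul_left _ hball
    _ ≤ q ^ ((s + 1) * (2 * s + 1) + 2) * (Y.ncard * q ^ (4 * s + 2)) :=
        Nat.mul_le_mul_left _ (Nat.mul_le_mul_right _ hsphere)
    _ = Y.ncard * q ^ ((s + 1) * (2 * s + 5)) := by ring

/-- If `(A ⊔ C) ⊓ (A ⊔ C') ≠ A` throughout `𝒞` and no vector outside `A` lies in all `A ⊔ C`, then
every `C` is met in two vectors independent modulo `A`, chosen from two fixed members. -/
lemma IsSymplectic.ncard_mul_le_of_forall_exists_notMem (hB : IsSymplectic B d)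
    (hA : IsLagrangian B A) (hk : k ≤ d) (h𝒞 : 𝒞 ⊆ sphere B A k)
    (hinf : ∀ C ∈ 𝒞, ∀ C' ∈ 𝒞, (A ⊔ C) ⊓ (A ⊔ C') ≠ A)
    (hcommon : ∀ v ∉ A, ∃ C ∈ 𝒞, v ∉ A ⊔ C)
    (hn : ∀ v ∉ A, (sphereThrough B A (A ⊔ F ∙ v) k).ncard ≤ n) :
    𝒞.ncard * Nat.card F ^ (d - k) ≤ Nat.card F ^ (2 * k) * n := by
  have hrank : ∀ C ∈ 𝒞, finrank F ↥(A ⊔ C) = finrank F A + k := fun C hC ↦ by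
    obtain ⟨hCL, rfl⟩ := h𝒞 hC
    rw [hB.finrank_sup_eq_add_polarDist hA hCL, hB.finrank_eq_of_isLagrangian hA]
  have hpoint : ∀ v ∉ A, {C ∈ 𝒞 | v ∈ A ⊔ C}.ncard * Nat.card F ^ (d - k) ≤
      Nat.card F ^ k * n := by
    intro v hv
    obtain ⟨C₂, hC₂, hvC₂⟩ := hcommon v hv
    refine ncard_mul_le_of_forall_inf_ne le_sup_left (hrank C₂ hC₂)
      (fun C hC ↦ hinf C hC.1 C₂ hC₂) fun w hwC₂ hw ↦ ?_
    have hwv : w ∉ A ⊔ F ∙ v := fun h ↦ hw <| by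
      have := disjoint_span_singleton_of_notMem hvC₂
      have h' : w ∈ (A ⊔ F ∙ v) ⊓ (A ⊔ C₂) := ⟨h, hwC₂⟩
      rwa [sup_inf_assoc_of_le _ le_sup_left, this.symm.eq_bot, sup_bot_eq] at h'
    refine le_trans (Nat.mul_le_mul_right _ (Set.ncard_le_ncard ?_)) <|
      (hB.ncard_sphereThrough_sup_mul_le hA le_sup_left hwv hk).trans (hn v hv)
    rintro C ⟨⟨hC, hvC⟩, hwC⟩
    exact ⟨h𝒞 hC, sup_le (sup_le le_sup_left ((span_singleton_le_iff_mem _ _).2 hvC))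
      ((span_singleton_le_iff_mem _ _).2 hwC)⟩
  rcases 𝒞.eq_empty_or_nonempty with rfl | ⟨C₁, hC₁⟩
  · simp
  calc 𝒞.ncard * Nat.card F ^ (d - k) ≤ Nat.card F ^ k * (Nat.card F ^ k * n) :=
        ncard_mul_le_of_forall_inf_ne le_sup_left (hrank C₁ hC₁)
          (fun C hC ↦ hinf C hC C₁ hC₁) fun v _ hv ↦ hpoint v hv
    _ = Nat.card F ^ (2 * k) * n := by ring

end Finite

/-! ### Stars -/

/-- The generators meeting `U` in dimension at least `d - (s + 1)`; for `U` an isotropic hyperplane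
of a generator, these are the extremal examples of `(d, 2 * s + 1)`-EKR sets. -/
def polarStar (B : BilinForm F V) (d s : ℕ) (U : Submodule F V) : Set (Submodule F V) :=
  {W | IsLagrangian B W ∧ d ≤ finrank F ↥(W ⊓ U) + s + 1}

namespace IsSymplectic

variable [FiniteDimensional F V]

lemma isEKR_polarStar (hB : IsSymplectic B d) (hU : finrank F U + 1 = d) :
    IsEKR B (2 * s + 1) (polarStar B d s U) where
  isLagrangian _ hW := hW.1
  polarDist_le := by
    rintro W₁ ⟨hW₁, h₁⟩ W₂ ⟨-, h₂⟩
    have h := finrank_inf_add_finrank_inf_le W₁ W₂ U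
    have h' := finrank_inf_add_polarDist W₁ W₂
    rw [hB.finrank_eq_of_isLagrangian hW₁] at h'
    lia

lemma polarStar_orthogonal_sup_span_singleton (hB : IsSymplectic B d) (hA : IsLagrangian B A)
    (v : V) :
    polarStar B d s (B.orthogonal (A ⊔ F ∙ v)) =
      ball B A (s + 1) ∪ sphereThrough B A (A ⊔ F ∙ v) (s + 1) := by
  ext C
  by_cases hC : IsLagrangian B C
  swap
  · simp [polarStar, ball, sphereThrough, sphere, hC]
  have hdim : finrank F ↥(C ⊓ B.orthogonal (A ⊔ F ∙ v)) + finrank F ↥(A ⊔ C ⊔ F ∙ v) = 2 * d := by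
    have h := hB.finrank_add_finrank_orthogonal (A ⊔ C ⊔ F ∙ v)
    rwa [sup_right_comm, orthogonal_sup, hC, inf_comm, add_comm, sup_right_comm] at h
  have hAC := hB.finrank_sup_eq_add_polarDist hA hC
  simp only [polarStar, ball, sphereThrough, sphere, hC, true_and, Set.mem_union, Set.mem_ofPred_eq,
    sup_le_iff, le_sup_left, span_singleton_le_iff_mem]
  by_cases hvC : v ∈ A ⊔ C
  · rw [sup_eq_left.2 ((span_singleton_le_iff_mem _ _).2 hvC)] at hdim
    simp only [hvC, and_true]
    lia
  · rw [finrank_sup_span_singleton hvC] at hdim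
    simp only [hvC, and_false, or_false]
    lia

end IsSymplectic

variable [Finite V]

namespace IsSymplectic

lemma ncard_polarStar_orthogonal_sup_span_singleton (hB : IsSymplectic B d) (hA : IsLagrangian B A)
    (v : V) : (polarStar B d s (B.orthogonal (A ⊔ F ∙ v))).ncard =
      (ball B A (s + 1)).ncard + (sphereThrough B A (A ⊔ F ∙ v) (s + 1)).ncard := by
  rw [hB.polarStar_orthogonal_sup_span_singleton hA v]
  exact Set.ncard_union_eq (Set.disjoint_left.2 fun C hC hC' ↦ hC.2.ne hC'.1.2)

lemma ncard_polarStar_le (hB : IsSymplectic B d) (hU : U ≤ B.orthogonal U)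
    (hU' : U' ≤ B.orthogonal U') (hUU' : finrank F U = finrank F U') :
    (polarStar B d s U).ncard ≤ (polarStar B d s U').ncard := by
  obtain ⟨A, hA, hUA⟩ := hB.exists_isLagrangian_ge hU
  obtain ⟨A', hA', hUA'⟩ := hB.exists_isLagrangian_ge hU'
  obtain ⟨g, -, hg⟩ := hB.exists_isometryEquiv_map_eq hA hA'
    (hA.ge.trans (BilinForm.orthogonal_le hUA)) (hA'.ge.trans (BilinForm.orthogonal_le hUA'))
    (by
      have := hB.finrank_add_finrank_orthogonal U
      have := hB.finrank_add_finrank_orthogonal U'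
      lia)
  have hgU : U.map (g : V →ₗ[F] V) = U' := by
    rw [← hB.orthogonal_orthogonal U, map_orthogonal, hg, hB.orthogonal_orthogonal]
  refine Set.ncard_le_ncard_of_injOn (fun C ↦ C.map (g : V →ₗ[F] V)) ?_
    (map_injective_of_injective g.toLinearEquiv.injective).injOn
  rintro C ⟨hC, hCU⟩
  refine ⟨isLagrangian_map g hC, ?_⟩
  rw [← hgU, ← Submodule.map_inf _ g.toLinearEquiv.injective]
  rwa [LinearEquiv.finrank_map_eq g.toLinearEquiv]

end IsSymplectic

variable [Finite F]

/-- If no vector outside `A` lies in all `A ⊔ C`, where `C` runs through the outermost layer of `Y`,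
then this layer is too small for `Y` to be as large as a star. -/
lemma IsEKR.exists_subset_polarStar (hB : IsSymplectic B d) (hd : 3 * (s + 1) < d)
    (hY : IsEKR B (2 * s + 1) Y) (hA : IsLagrangian B A) (hYA : Y ⊆ ball B A (s + 2))
    (hcard : ∀ v ∉ A, (polarStar B d s (B.orthogonal (A ⊔ F ∙ v))).ncard ≤ Y.ncard) :
    ∃ v ∉ A, Y ⊆ polarStar B d s (B.orthogonal (A ⊔ F ∙ v)) := by
  set Y' := Y ∩ sphere B A (s + 1) with hY'
  have hsub : Y ⊆ ball B A (s + 1) ∪ Y' := by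
    rw [ball_succ] at hYA
    exact fun C hC ↦ (hYA hC).imp_right (⟨hC, ·⟩)
  by_contra! hcon
  have hcommon : ∀ v ∉ A, ∃ C ∈ Y', v ∉ A ⊔ C := by
    intro v hv
    by_contra! h
    refine hcon v hv ?_
    rw [hB.polarStar_orthogonal_sup_span_singleton hA v]
    exact hsub.trans <| Set.union_subset_union_right _ fun C hC ↦
      ⟨hC.2, sup_le le_sup_left ((span_singleton_le_iff_mem _ _).2 (h C hC))⟩
  have hlayer : ∀ v ∉ A, (sphereThrough B A (A ⊔ F ∙ v) (s + 1)).ncard ≤ Y'.ncard := by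
    intro v hv
    have h := hcard v hv
    rw [hB.ncard_polarStar_orthogonal_sup_span_singleton hA v] at h
    exact Nat.le_of_add_le_add_left
      (h.trans ((Set.ncard_le_ncard hsub).trans (Set.ncard_union_le _ _)))
  have hinf : ∀ C ∈ Y', ∀ C' ∈ Y', (A ⊔ C) ⊓ (A ⊔ C') ≠ A := by
    rintro C ⟨hC, hCL, hAC⟩ C' ⟨hC', hCL', hAC'⟩
    have := hY.polarDist_le C hC C' hC'
    exact hB.sup_inf_sup_ne hA hCL hCL' (by lia)
  have hle := hB.ncard_mul_le_of_forall_exists_notMem hA (by lia) Set.inter_subset_right hinf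
    hcommon hlayer
  obtain ⟨v, hv⟩ := hB.exists_notMem hA (by lia)
  obtain ⟨C, hC, -⟩ := hcommon v hv
  have hpos : 0 < Y'.ncard := (Set.ncard_pos).2 ⟨C, hC⟩
  rw [mul_comm] at hle
  have hpow := (Nat.pow_le_pow_iff_right (Finite.one_lt_card (α := F))).1
    (Nat.le_of_mul_le_mul_right hle hpos)
  lia

lemma IsEKR.exists_eq_polarStar (hB : IsSymplectic B d) (hd : (s + 1) * (2 * s + 5) < d)
    (hY : IsEKR B (2 * s + 1) Y)
    (hcard : ∀ U, U ≤ B.orthogonal U → finrank F U + 1 = d → (polarStar B d s U).ncard ≤ Y.ncard) :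
    ∃ U, U ≤ B.orthogonal U ∧ finrank F U + 1 = d ∧ Y = polarStar B d s U := by
  have hstar {A : Submodule F V} (hA : IsLagrangian B A) :
      ∀ v ∉ A, (polarStar B d s (B.orthogonal (A ⊔ F ∙ v))).ncard ≤ Y.ncard := fun v hv ↦
    hcard _ (hA.le_orthogonal ((BilinForm.orthogonal_le le_sup_left).trans hA.le))
      (hB.finrank_orthogonal_sup_span_singleton hA hv)
  have hball {A : Submodule F V} (hA : IsLagrangian B A) :
      (ball B A (s + 1)).ncard ≤ Y.ncard := by
    obtain ⟨v, hv⟩ := hB.exists_notMem hA (by lia)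
    refine le_trans ?_ (hstar hA v hv)
    rw [hB.ncard_polarStar_orthogonal_sup_span_singleton hA v]
    exact Nat.le_add_right _ _
  have hne : Y.Nonempty := by
    obtain ⟨A, hA⟩ := hB.exists_isLagrangian
    exact (Set.ncard_pos).1
      (((Set.ncard_pos).2 ⟨A, mem_ball_self hA s.succ_pos⟩).trans_le (hball hA))
  obtain ⟨A, hA, hcenter⟩ := hY.exists_ncard_le hB hne
  have hsphere : (sphere B A s).ncard ≤ Y.ncard :=
    (Set.ncard_le_ncard sphere_subset_ball).trans (hball hA)
  obtain ⟨v, hv, hsub⟩ := hY.exists_subset_polarStar hB (by nlinarith) hA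
    (hY.subset_ball hB hd hne hA hcenter hsphere) (hstar hA)
  exact ⟨_, hA.le_orthogonal ((BilinForm.orthogonal_le le_sup_left).trans hA.le),
    hB.finrank_orthogonal_sup_span_singleton hA hv,
    Set.eq_of_subset_of_ncard_le hsub (hstar hA v hv)⟩

lemma IsEKR.ncard_le_ncard_polarStar (hB : IsSymplectic B d) (hd : (s + 1) * (2 * s + 5) < d)
    (hZ : IsEKR B (2 * s + 1) Z) (hU : U ≤ B.orthogonal U) (hUd : finrank F U + 1 = d) :
    Z.ncard ≤ (polarStar B d s U).ncard := by
  by_contra! hlt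
  obtain ⟨U', hU', hUd', rfl⟩ := hZ.exists_eq_polarStar hB hd fun U' hU' hUd' ↦
    (hB.ncard_polarStar_le hU' hU (by lia)).trans hlt.le
  exact hlt.not_ge (hB.ncard_polarStar_le hU' hU (by lia))

theorem IsEKR.forall_ncard_le_iff (hB : IsSymplectic B d) (hd : (s + 1) * (2 * s + 5) < d)
    (hY : IsEKR B (2 * s + 1) Y) :
    (∀ Z, IsEKR B (2 * s + 1) Z → Z.ncard ≤ Y.ncard) ↔
      ∃ U, U ≤ B.orthogonal U ∧ finrank F U + 1 = d ∧ Y = polarStar B d s U := by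
  refine ⟨fun hmax ↦ hY.exists_eq_polarStar hB hd fun U _ hUd ↦ hmax _ (hB.isEKR_polarStar hUd), ?_⟩
  rintro ⟨U, hU, hUd, rfl⟩ Z hZ
  exact hZ.ncard_le_ncard_polarStar hB hd hU hUd

end SymplecticEKR

open SymplecticEKR

theorem stmt19_general (F : Type*) [Field F] [Finite F]
    (V : Type*) [AddCommGroup V] [Module F V] [FiniteDimensional F V]
    (d t : ℕ) (hV : Module.finrank F V = 2 * d)
    (B : LinearMap.BilinForm F V) (hBnd : B.Nondegenerate) (hBalt : ∀ x : V, B x x = 0)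
    (ht : Odd t) (htd : (t + 1) * (t + 4) < 2 * d)
    (Y : Set (Submodule F V))
    (hYgen : ∀ W ∈ Y, Module.finrank F W = d ∧ ∀ x ∈ W, ∀ y ∈ W, B x y = 0)
    (hYekr : ∀ W₁ ∈ Y, ∀ W₂ ∈ Y, d - t ≤ Module.finrank F ↥(W₁ ⊓ W₂)) :
    (∀ Z : Set (Submodule F V),
        (∀ W ∈ Z, Module.finrank F W = d ∧ ∀ x ∈ W, ∀ y ∈ W, B x y = 0) →
        (∀ W₁ ∈ Z, ∀ W₂ ∈ Z, d - t ≤ Module.finrank F ↥(W₁ ⊓ W₂)) →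
        Z.ncard ≤ Y.ncard)
      ↔ ∃ U : Submodule F V,
          (Module.finrank F U = d - 1 ∧ ∀ x ∈ U, ∀ y ∈ U, B x y = 0) ∧
          Y = {W : Submodule F V |
                (Module.finrank F W = d ∧ ∀ x ∈ W, ∀ y ∈ W, B x y = 0) ∧
                d - (t + 1) / 2 ≤ Module.finrank F ↥(W ⊓ U)} := by
  have := Module.finite_of_finite F (M := V)
  have hB : IsSymplectic B d := ⟨hBnd, hBalt, hV⟩
  obtain ⟨s, rfl⟩ := ht
  have hd : (s + 1) * (2 * s + 5) < d := by linarith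
  have hmain := IsEKR.forall_ncard_le_iff hB hd (hB.isEKR_iff.2 ⟨hYgen, hYekr⟩)
  simp only [hB.isEKR_iff, and_imp] at hmain
  rw [hmain]
  refine exists_congr fun U ↦ ?_
  have hstar : polarStar B d s U = {W : Submodule F V |
      (finrank F W = d ∧ ∀ x ∈ W, ∀ y ∈ W, B x y = 0) ∧
        d - (2 * s + 1 + 1) / 2 ≤ finrank F ↥(W ⊓ U)} :=
    Set.ext fun W ↦ and_congr hB.isLagrangian_iff (by lia)
  have hU : finrank F U + 1 = d ↔ finrank F U = d - 1 := by lia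
  rw [hstar, le_orthogonal_self_iff, hU, and_left_comm, and_assoc]

theorem stmt19 (F : Type*) [Field F] [Fintype F] (hq : 3 ≤ Fintype.card F)
    (V : Type*) [AddCommGroup V] [Module F V] [FiniteDimensional F V]
    (d t : ℕ) (hV : Module.finrank F V = 2 * d)
    (B : LinearMap.BilinForm F V) (hBnd : B.Nondegenerate)
    (hBalt : ∀ x : V, B x x = 0)
    (ht : Odd t) (ht1 : 1 ≤ t) (htd : 5 * (t + 2) ^ 2 ≤ 8 * d)
    (Y : Set (Submodule F V))
    (hYgen : ∀ W ∈ Y, Module.finrank F W = d ∧ ∀ x ∈ W, ∀ y ∈ W, B x y = 0)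
    (hYekr : ∀ W₁ ∈ Y, ∀ W₂ ∈ Y, d - t ≤ Module.finrank F ↥(W₁ ⊓ W₂)) :
    (∀ Z : Set (Submodule F V),
        (∀ W ∈ Z, Module.finrank F W = d ∧ ∀ x ∈ W, ∀ y ∈ W, B x y = 0) →
        (∀ W₁ ∈ Z, ∀ W₂ ∈ Z, d - t ≤ Module.finrank F ↥(W₁ ⊓ W₂)) →
        Z.ncard ≤ Y.ncard)
      ↔ ∃ U : Submodule F V,
          (Module.finrank F U = d - 1 ∧ ∀ x ∈ U, ∀ y ∈ U, B x y = 0) ∧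
          Y = {W : Submodule F V |
                (Module.finrank F W = d ∧ ∀ x ∈ W, ∀ y ∈ W, B x y = 0) ∧
                d - (t + 1) / 2 ≤ Module.finrank F ↥(W ⊓ U)} :=
  stmt19_general F V d t hV B hBnd hBalt ht (by nlinarith) Y hYgen hYekr
end
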